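/- arXiv:1310.7767 — 2 statements merged into one kernel-verified Lean document; each statement's English description precedes it below -/
import Mathlib

section
/- Let λ ∈ ℂ be an eigenvalue of the imaginary cubic oscillator. Then λ is real and positive, i.e. Im λ = 0 and Re λ > 0. -/
open MeasureTheory

/-- `lam` is an eigenvalue of the imaginary cubic oscillator `H = p² + i x³`:
there is a nonzero, twice continuously differentiable, square-integrable
`ψ : ℝ → ℂ` with `-ψ'' + i x³ ψ = lam ψ`. -/
def IsEigenvalueICO (lam : ℂ) : Prop :=
  ∃ ψ : ℝ → ℂ, ψ ≠ 0 ∧ ContDiff ℝ 2 ψ ∧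
    Integrable (fun x : ℝ => ‖ψ x‖ ^ 2) ∧
    ∀ x : ℝ, -(deriv (deriv ψ) x) + Complex.I * (x : ℂ) ^ 3 * ψ x = lam * ψ x

/-!
Continue an eigenfunction to the complex plane and rotate it: `f (I s) = ψ s` is entire and solves
`f'' = (z³ + λ) f`. The form identity for `ψ` gives `Re λ > 0`. The function
`g z = conj (f (conj z))` solves the equation with `conj λ` in place of `λ`, and `‖f‖ = ‖g‖` on the
real axis.

Square-integrability along the imaginary axis makes `f` and `g` recessive throughout the right half
plane. Following vertical lines upwards from the real axis to the ray spanned by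
`ω = exp (2πi / 5)`, the WKB expansion compares `‖f‖` and `‖g‖` on the ray asymptotically: their
ratio tends to `1`, because it is `1` at the foot of each line.

Since `ω⁵ = 1`, the functions `F t = f (ω t)` and `G t = g (ω t)` solve `F'' = (t³ + ω² λ) F` and
`G'' = (t³ + ω² conj λ) G` with the *real* potential `t³`. If `Im λ > 0`, then
`Re (ω² λ) < Re (ω² conj λ)`, and Green's identities together with the Cauchy–Schwarz inequality
show that `(∫_{x}^{∞} ‖F‖²) / (∫_{x}^{∞} ‖G‖²)` is strictly increasing in `x`. It tends to `1`,
which forces `‖F 0‖ < ‖G 0‖`, against `‖f 0‖ = ‖g 0‖`. Exchanging `f` and `g` excludes `Im λ < 0`.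
-/

open Set Filter Topology Asymptotics
open scoped ComplexConjugate

section Calculus

variable {E : Type*} [NormedAddCommGroup E] [NormedSpace ℝ E] {a b : ℝ}

theorem norm_sub_le_sub_of_norm_deriv_le {g g' : ℝ → E} {B B' : ℝ → ℝ} (hab : a ≤ b)
    (hg : ∀ x ∈ Icc a b, HasDerivAt g (g' x) x) (hB : ∀ x ∈ Icc a b, HasDerivAt B (B' x) x)
    (hle : ∀ x ∈ Icc a b, ‖g' x‖ ≤ B' x) : ‖g b - g a‖ ≤ B b - B a :=
  image_norm_le_of_norm_deriv_right_le_deriv_boundary' (f := fun x => g x - g a)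
    (B := fun x => B x - B a)
    (fun x hx => ((hg x hx).continuousAt.sub continuousAt_const).continuousWithinAt)
    (fun x hx => ((hg x (Ico_subset_Icc_self hx)).sub_const _).hasDerivWithinAt)
    (by simp)
    (fun x hx => ((hB x hx).continuousAt.sub continuousAt_const).continuousWithinAt)
    (fun x hx => ((hB x (Ico_subset_Icc_self hx)).sub_const _).hasDerivWithinAt)
    (fun x hx => hle x (Ico_subset_Icc_self hx)) (right_mem_Icc.2 hab)

theorem monotoneOn_of_hasDerivAt_nonneg {D : Set ℝ} (hD : Convex ℝ D) {g g' : ℝ → ℝ}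
    (hg : ∀ x ∈ D, HasDerivAt g (g' x) x) (hg' : ∀ x ∈ D, 0 ≤ g' x) : MonotoneOn g D :=
  monotoneOn_of_hasDerivWithinAt_nonneg hD
    (fun x hx => (hg x hx).continuousAt.continuousWithinAt)
    (fun x hx => (hg x (interior_subset hx)).hasDerivWithinAt)
    (fun x hx => hg' x (interior_subset hx))

theorem mul_sub_le_sub_of_le_deriv {g g' : ℝ → ℝ} {c : ℝ} (hab : a ≤ b)
    (hg : ∀ x ∈ Icc a b, HasDerivAt g (g' x) x) (hc : ∀ x ∈ Icc a b, c ≤ g' x) :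
    c * (b - a) ≤ g b - g a := by
  have hmono : MonotoneOn (fun x => g x - c * x) (Icc a b) :=
    monotoneOn_of_hasDerivAt_nonneg (convex_Icc a b)
      (fun x hx => (hg x hx).sub ((hasDerivAt_id x).const_mul c))
      (fun x hx => by linarith [hc x hx])
  linarith [hmono (left_mem_Icc.2 hab) (right_mem_Icc.2 hab) hab]

theorem le_mul_exp_of_deriv_le {g g' : ℝ → ℝ} {K : ℝ} (hab : a ≤ b)
    (hg : ∀ x ∈ Icc a b, HasDerivAt g (g' x) x) (hK : ∀ x ∈ Icc a b, g' x ≤ K * g x) :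
    g b ≤ g a * Real.exp (K * (b - a)) := by
  have hmono : AntitoneOn (fun x => g x * Real.exp (-(K * x))) (Icc a b) := by
    refine fun x hx y hy hxy => neg_le_neg_iff.1 (monotoneOn_of_hasDerivAt_nonneg
      (g := fun x => -(g x * Real.exp (-(K * x)))) (convex_Icc a b)
      (fun x hx => ((hg x hx).mul ((hasDerivAt_id x).const_mul K).neg.exp).neg)
      (fun x hx => ?_) hx hy hxy)
    have := mul_nonneg (sub_nonneg.2 (hK x hx)) (Real.exp_pos (-(K * x))).le
    simp only [Pi.neg_apply, id, mul_one]
    linarith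
  have key := hmono (left_mem_Icc.2 hab) (right_mem_Icc.2 hab) hab
  have := mul_le_mul_of_nonneg_right key (Real.exp_pos (K * b)).le
  simp only [mul_assoc, ← Real.exp_add] at this
  ring_nf at this ⊢
  simpa using this

/-- The idea: where `Φ > 0`, the derivative of `-1 / Φ` is at least `1 / p`, so by AM-GM the
function `∫ p - 1 / Φ` grows at least linearly although it is bounded above. -/
theorem nonpos_of_sq_le_deriv_mul {Φ Φ' p : ℝ → ℝ} (hp : Continuous p) (hp0 : ∀ x, 0 ≤ p x)
    (hpi : IntegrableOn p (Ioi a)) (hΦ : ∀ x, a ≤ x → HasDerivAt Φ (Φ' x) x)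
    (hΦ' : ∀ x, a ≤ x → 0 ≤ Φ' x) (hle : ∀ x, a ≤ x → Φ x ^ 2 ≤ Φ' x * p x) {x : ℝ}
    (hx : a ≤ x) : Φ x ≤ 0 := by
  by_contra! hpos
  have hmono : MonotoneOn Φ (Ici a) :=
    monotoneOn_of_hasDerivAt_nonneg (convex_Ici a) hΦ hΦ'
  have hΦpos : ∀ y, x ≤ y → 0 < Φ y := fun y hy => hpos.trans_le (hmono hx (hx.trans hy) hy)
  have hgrow : ∀ b, x ≤ b → 1 * (b - x) ≤
      ((∫ t in x..b, p t) - (Φ b)⁻¹) - ((∫ t in x..x, p t) - (Φ x)⁻¹) := fun b hb =>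
    mul_sub_le_sub_of_le_deriv (g := fun y => (∫ t in x..y, p t) - (Φ y)⁻¹)
      (g' := fun y => p y - -Φ' y / Φ y ^ 2) hb
      (fun y hy => (hp.integral_hasStrictDerivAt x y).hasDerivAt.sub
        ((hΦ y (hx.trans hy.1)).fun_inv (hΦpos y hy.1).ne'))
      (fun y hy => by
        have h0 := hp0 y
        have h1 := hle y (hx.trans hy.1)
        have h2 := hΦ' y (hx.trans hy.1)
        have h3 : 0 < Φ y ^ 2 := pow_pos (hΦpos y hy.1) 2
        have hprod : 1 ≤ p y * (Φ' y / Φ y ^ 2) := by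
          rw [← mul_div_assoc, le_div_iff₀ h3]; linarith
        have hnonneg : 0 ≤ Φ' y / Φ y ^ 2 := by positivity
        rw [neg_div, sub_neg_eq_add]
        nlinarith [sq_nonneg (p y - Φ' y / Φ y ^ 2)])
  have hbdd : ∀ b, x ≤ b → ∫ t in x..b, p t ≤ ∫ t in Ioi a, p t := fun b hb => by
    rw [intervalIntegral.integral_of_le hb]
    exact setIntegral_mono_set hpi (ae_of_all _ hp0)
      (Ioc_subset_Ioi_self.trans (Ioi_subset_Ioi hx)).eventuallyLE
  set J := ∫ t in Ioi a, p t
  have hJ : 0 ≤ J := integral_nonneg hp0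
  have hinv : 0 < (Φ x)⁻¹ := inv_pos.2 hpos
  have hb : x ≤ x + J + (Φ x)⁻¹ + 1 := by linarith
  have h1 := hgrow _ hb
  have h2 := hbdd _ hb
  have h3 := inv_pos.2 (hΦpos _ hb)
  rw [intervalIntegral.integral_same] at h1
  linarith

end Calculus

/-- `y` solves the Schrödinger equation `y'' = V y`; the independent variable is real or complex,
and in the complex case `y` is an entire function. -/
structure SolvesSchrodinger {𝕜 : Type*} [NontriviallyNormedField 𝕜] [NormedAlgebra 𝕜 ℂ]
    (V y : 𝕜 → ℂ) : Prop where
  hasDerivAt : ∀ t, HasDerivAt y (deriv y t) t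
  hasDerivAt_deriv : ∀ t, HasDerivAt (deriv y) (V t * y t) t

theorem real_inner_mul_self (w z : ℂ) : inner ℝ z (w * z) = w.re * ‖z‖ ^ 2 := by
  rw [Complex.inner, Complex.sq_norm, mul_assoc, Complex.mul_conj, Complex.re_mul_ofReal]

theorem hasDerivAt_add_mul_ofReal (z₀ d : ℂ) (t : ℝ) :
    HasDerivAt (fun t : ℝ => z₀ + d * t) d t := by
  simpa using ((hasDerivAt_id t).ofReal_comp.const_mul d).const_add z₀

/-- The flux `Re (conj y · c y')` of a function `y` in the direction `c`. For `c = 1` it is half the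
derivative of `‖y‖²`. -/
noncomputable def schrodingerFlux (c : ℂ) (y : ℝ → ℂ) (t : ℝ) : ℝ :=
  inner ℝ (y t) (c * deriv y t)

namespace SolvesSchrodinger

section Algebra

variable {𝕜 : Type*} [NontriviallyNormedField 𝕜] [NormedAlgebra 𝕜 ℂ] {V y z : 𝕜 → ℂ}

theorem mk_of_hasDerivAt {y' : 𝕜 → ℂ} (h : ∀ t, HasDerivAt y (y' t) t)
    (h' : ∀ t, HasDerivAt y' (V t * y t) t) : SolvesSchrodinger V y := by
  have hy' : deriv y = y' := funext fun t => (h t).deriv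
  exact ⟨fun t => hy' ▸ h t, fun t => hy' ▸ h' t⟩

theorem continuous (h : SolvesSchrodinger V y) : Continuous y :=
  continuous_iff_continuousAt.2 fun t => (h.hasDerivAt t).continuousAt

theorem continuous_deriv (h : SolvesSchrodinger V y) : Continuous (deriv y) :=
  continuous_iff_continuousAt.2 fun t => (h.hasDerivAt_deriv t).continuousAt

theorem sub (hy : SolvesSchrodinger V y) (hz : SolvesSchrodinger V z) :
    SolvesSchrodinger V (fun t => y t - z t) :=
  mk_of_hasDerivAt (fun t => (hy.hasDerivAt t).sub (hz.hasDerivAt t))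
    (fun t => ((hy.hasDerivAt_deriv t).sub (hz.hasDerivAt_deriv t)).congr_deriv (by ring))

theorem const_mul (hy : SolvesSchrodinger V y) (c : ℂ) : SolvesSchrodinger V fun t => c * y t :=
  mk_of_hasDerivAt (fun t => (hy.hasDerivAt t).const_mul c)
    (fun t => ((hy.hasDerivAt_deriv t).const_mul c).congr_deriv (by ring))

theorem comp_neg (hy : SolvesSchrodinger V y) :
    SolvesSchrodinger (fun t => V (-t)) (fun t => y (-t)) := by
  refine mk_of_hasDerivAt (y' := fun t => -deriv y (-t))
    (fun t => ((hy.hasDerivAt (-t)).scomp t (hasDerivAt_neg t)).congr_deriv (by simp))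
    (fun t => ((hy.hasDerivAt_deriv (-t)).scomp t (hasDerivAt_neg t)).neg.congr_deriv (by simp))

end Algebra

section Lines

variable {V f : ℂ → ℂ} (hf : SolvesSchrodinger V f) (z₀ d : ℂ)
include hf

theorem hasDerivAt_comp_line (t : ℝ) :
    HasDerivAt (fun t : ℝ => f (z₀ + d * t)) (d * deriv f (z₀ + d * t)) t :=
  ((hf.hasDerivAt _).comp t (hasDerivAt_add_mul_ofReal z₀ d t)).congr_deriv (mul_comm _ _)

theorem deriv_comp_line :
    deriv (fun t : ℝ => f (z₀ + d * t)) =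
      fun t : ℝ => d * deriv f (z₀ + d * t) :=
  funext fun t => (hf.hasDerivAt_comp_line z₀ d t).deriv

theorem comp_line :
    SolvesSchrodinger (fun t : ℝ => d ^ 2 * V (z₀ + d * t)) (fun t : ℝ => f (z₀ + d * t)) := by
  refine mk_of_hasDerivAt (hf.hasDerivAt_comp_line z₀ d) fun t => ?_
  exact (((hf.hasDerivAt_deriv _).comp t (hasDerivAt_add_mul_ofReal z₀ d t)).const_mul
    d).congr_deriv (by ring)

omit z₀ d in
theorem conj_conj :
    SolvesSchrodinger (fun z => conj (V (conj z))) (fun z => conj (f (conj z))) := by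
  refine mk_of_hasDerivAt (y' := fun z => conj (deriv f (conj z))) (fun z => ?_) (fun z => ?_)
  · simpa only [Complex.conj_conj] using! (hf.hasDerivAt (conj z)).conj_conj
  · simpa only [map_mul, Complex.conj_conj] using! (hf.hasDerivAt_deriv (conj z)).conj_conj

end Lines

section Energy

variable {V y : ℝ → ℂ}

theorem energy_le (hy : SolvesSchrodinger V y) {a b M : ℝ} (hab : a ≤ b) (hM : 0 ≤ M)
    (hV : ∀ t ∈ Icc a b, ‖V t‖ ≤ M ^ 2) :
    ‖deriv y b‖ ^ 2 + M ^ 2 * ‖y b‖ ^ 2 ≤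
      (‖deriv y a‖ ^ 2 + M ^ 2 * ‖y a‖ ^ 2) * Real.exp (2 * M * (b - a)) := by
  refine le_mul_exp_of_deriv_le (g := fun t => ‖deriv y t‖ ^ 2 + M ^ 2 * ‖y t‖ ^ 2) hab
    (fun t _ => (hy.hasDerivAt_deriv t).norm_sq.add ((hy.hasDerivAt t).norm_sq.const_mul (M ^ 2)))
    fun t ht => ?_
  have hforce : inner ℝ (deriv y t) (V t * y t) ≤ ‖deriv y t‖ * (M ^ 2 * ‖y t‖) := by
    refine (real_inner_le_norm _ _).trans ?_
    rw [norm_mul]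
    gcongr
    exact hV t ht
  have hkinetic := mul_le_mul_of_nonneg_left (real_inner_le_norm (y t) (deriv y t)) (sq_nonneg M)
  nlinarith [mul_nonneg hM (sq_nonneg (‖deriv y t‖ - M * ‖y t‖))]

theorem eq_zero_of_le (hy : SolvesSchrodinger V y) (hV : Continuous V) {a b : ℝ} (hab : a ≤ b)
    (h₀ : y a = 0) (h₁ : deriv y a = 0) : y b = 0 := by
  obtain ⟨C, hC⟩ := isCompact_Icc.exists_bound_of_continuousOn (s := Icc a b) hV.continuousOn
  have hC0 : 0 ≤ C := (norm_nonneg _).trans (hC a (left_mem_Icc.2 hab))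
  have key := hy.energy_le hab (by positivity : 0 ≤ C + 1)
    fun t ht => (hC t ht).trans (by nlinarith)
  rw [h₀, h₁] at key
  have hpos : 0 < (C + 1) ^ 2 := by positivity
  rw [← norm_eq_zero, ← sq_eq_zero_iff]
  refine le_antisymm ?_ (sq_nonneg _)
  simp only [norm_zero, ne_eq, OfNat.ofNat_ne_zero, not_false_eq_true, zero_pow, mul_zero,
    add_zero, zero_mul] at key
  nlinarith [sq_nonneg ‖deriv y b‖]

theorem eq_zero (hy : SolvesSchrodinger V y) (hV : Continuous V) {a : ℝ} (h₀ : y a = 0)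
    (h₁ : deriv y a = 0) : y = 0 := by
  funext t
  rcases le_total a t with h | h
  · exact hy.eq_zero_of_le hV h h₀ h₁
  · have hd : deriv (fun t => y (-t)) (-a) = 0 := by
      rw [deriv_comp_neg, neg_neg, h₁, neg_zero]
    simpa using hy.comp_neg.eq_zero_of_le (hV.comp continuous_neg) (neg_le_neg h)
      (by simpa using h₀) hd

theorem eq_of_initial_eq {z : ℝ → ℂ} (hy : SolvesSchrodinger V y) (hz : SolvesSchrodinger V z)
    (hV : Continuous V) {a : ℝ} (h₀ : y a = z a) (h₁ : deriv y a = deriv z a) : y = z := by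
  have hd : deriv (fun t => y t - z t) a = 0 := by
    rw [deriv_fun_sub (hy.hasDerivAt a).differentiableAt (hz.hasDerivAt a).differentiableAt, h₁,
      sub_self]
  exact funext fun t => sub_eq_zero.1
    (congrFun ((hy.sub hz).eq_zero hV (sub_eq_zero.2 h₀) hd) t)

end Energy

section Flux

variable {V y : ℝ → ℂ} {a : ℝ} {c : ℂ}

theorem hasDerivAt_flux (hy : SolvesSchrodinger V y) (c : ℂ) (t : ℝ) :
    HasDerivAt (schrodingerFlux c y) (c.re * ‖deriv y t‖ ^ 2 + (c * V t).re * ‖y t‖ ^ 2) t := by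
  refine ((hy.hasDerivAt t).inner ℝ ((hy.hasDerivAt_deriv t).const_mul c)).congr_deriv ?_
  rw [← mul_assoc, real_inner_mul_self, real_inner_mul_self, add_comm]

theorem abs_flux_le (c : ℂ) (y : ℝ → ℂ) (t : ℝ) :
    |schrodingerFlux c y t| ≤ ‖c‖ * ‖deriv y t‖ * ‖y t‖ := by
  refine (abs_real_inner_le_norm _ _).trans_eq ?_
  rw [norm_mul, mul_comm]

theorem half_le_add_mul_flux {k v : ℝ} (hv : (‖c‖ * k) ^ 2 ≤ v) (y : ℝ → ℂ) (t : ℝ) :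
    (‖deriv y t‖ ^ 2 + v * ‖y t‖ ^ 2) / 2 ≤
      ‖deriv y t‖ ^ 2 + v * ‖y t‖ ^ 2 + k * schrodingerFlux c y t := by
  have hvy := mul_le_mul_of_nonneg_right hv (sq_nonneg ‖y t‖)
  have hflux := mul_le_mul_of_nonneg_left (abs_flux_le c y t) (abs_nonneg k)
  rw [← abs_mul] at hflux
  have hsq : (|k| * (‖c‖ * ‖y t‖)) ^ 2 = (‖c‖ * k) ^ 2 * ‖y t‖ ^ 2 := by
    rw [mul_pow, sq_abs]
    ring
  nlinarith [neg_le_of_abs_le hflux, sq_nonneg (‖deriv y t‖ - |k| * (‖c‖ * ‖y t‖))]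

theorem flux_nonpos (hy : SolvesSchrodinger V y) (hc : c.re = 1)
    (hV : ∀ t, a ≤ t → 0 ≤ (c * V t).re) (hi : IntegrableOn (fun t => ‖y t‖ ^ 2) (Ioi a)) {t : ℝ}
    (ht : a ≤ t) : schrodingerFlux c y t ≤ 0 := by
  refine nonpos_of_sq_le_deriv_mul (p := fun t => ‖c‖ ^ 2 * ‖y t‖ ^ 2)
    ((hy.continuous.norm.pow 2).const_mul _) (fun t => by positivity) (hi.const_mul _)
    (fun t _ => hy.hasDerivAt_flux c t) (fun t ht => ?_) (fun t ht => ?_) ht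
  · have := mul_nonneg (hV t ht) (sq_nonneg ‖y t‖)
    rw [hc]
    positivity
  · have hsq : schrodingerFlux c y t ^ 2 ≤ (‖c‖ * ‖deriv y t‖ * ‖y t‖) ^ 2 :=
      sq_le_sq' (neg_le_of_abs_le (abs_flux_le c y t)) (le_of_abs_le (abs_flux_le c y t))
    have := mul_nonneg (mul_nonneg (hV t ht) (sq_nonneg ‖y t‖)) (sq_nonneg (‖c‖ * ‖y t‖))
    rw [hc]
    linarith

theorem antitone_norm_sq (hy : SolvesSchrodinger V y) (hV : ∀ t, 0 ≤ (V t).re)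
    (hi : Integrable fun t => ‖y t‖ ^ 2) : Antitone fun t => ‖y t‖ ^ 2 := by
  refine antitone_of_hasDerivAt_nonpos (fun t => (hy.hasDerivAt t).norm_sq) fun t => ?_
  have := hy.flux_nonpos (a := t) Complex.one_re (by simpa using fun t _ => hV t) hi.integrableOn
    le_rfl
  rw [schrodingerFlux, one_mul] at this
  exact mul_nonpos_of_nonneg_of_nonpos zero_le_two this

theorem eq_zero_of_re_nonneg (hy : SolvesSchrodinger V y) (hV : ∀ t, 0 ≤ (V t).re)
    (hi : Integrable fun t => ‖y t‖ ^ 2) : y = 0 := by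
  have hanti := hy.antitone_norm_sq hV hi
  have hmono := hy.comp_neg.antitone_norm_sq (fun t => hV _) hi.comp_neg
  have hconst : ∀ s t, s ≤ t → ‖y t‖ ^ 2 = ‖y s‖ ^ 2 := fun s t hst =>
    le_antisymm (hanti hst) (by simpa using hmono (neg_le_neg hst))
  have hconst' : (fun t => ‖y t‖ ^ 2) = fun _ => ‖y 0‖ ^ 2 := funext fun t =>
    (le_total 0 t).elim (hconst 0 t) fun h => (hconst t 0 h).symm
  rw [hconst', integrable_const_iff] at hi
  have hzero : ‖y 0‖ ^ 2 = 0 := hi.resolve_right fun h => by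
    simp [isFiniteMeasure_iff] at h
  funext t
  simpa [hzero] using congrFun hconst' t

theorem frequently_mul_exp_lt (hy : SolvesSchrodinger V y) (hc : c.re = 1) {κ κ' : ℝ → ℝ}
    (hκ : ∀ t, HasDerivAt κ (κ' t) t) (hV : ∀ t, a ≤ t → (‖c‖ * κ' t) ^ 2 ≤ (c * V t).re)
    (hi : IntegrableOn (fun t => ‖y t‖ ^ 2) (Ioi a)) {ε : ℝ} (hε : 0 < ε) :
    ∃ᶠ t in atTop,
      (‖deriv y t‖ ^ 2 + (c * V t).re * ‖y t‖ ^ 2) * Real.exp (κ t) < ε := by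
  intro hev
  obtain ⟨b, hb⟩ := eventually_atTop.1 (hev.and (eventually_ge_atTop a))
  have hflux : ∀ t, b ≤ t → schrodingerFlux c y t * Real.exp (κ t) ≤ 0 := fun t ht =>
    mul_nonpos_of_nonpos_of_nonneg
      (hy.flux_nonpos hc (fun t ht => (sq_nonneg _).trans (hV t ht)) hi (hb t ht).2)
      (Real.exp_pos _).le
  have hgrow : ∀ t, b ≤ t → ε / 2 * (t - b) ≤
      schrodingerFlux c y t * Real.exp (κ t) - schrodingerFlux c y b * Real.exp (κ b) := by
    refine fun t ht => mul_sub_le_sub_of_le_deriv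
      (g := fun t => schrodingerFlux c y t * Real.exp (κ t)) ht
      (fun s _ => (hy.hasDerivAt_flux c s).mul (hκ s).exp) fun s hs => ?_
    have hs' := hb s hs.1
    have := mul_le_mul_of_nonneg_right (half_le_add_mul_flux (hV s hs'.2) y s)
      (Real.exp_pos (κ s)).le
    rw [hc, one_mul]
    linarith [not_lt.1 hs'.1]
  set X := schrodingerFlux c y b * Real.exp (κ b)
  have hX : X ≤ 0 := hflux b le_rfl
  have hbt : b ≤ b + (1 - X) / (ε / 2) := le_add_of_nonneg_right (by
    have : 0 ≤ 1 - X := by linarith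
    positivity)
  have h1 := hgrow _ hbt
  have h2 := hflux _ hbt
  rw [add_sub_cancel_left, mul_div_cancel₀ _ (by positivity)] at h1
  linarith

end Flux

end SolvesSchrodinger

section EntirePowerSeries

variable {c : ℕ → ℂ}

theorem summable_mul_pow_of_forall_bounded
    (hc : ∀ R : ℝ, 0 < R → ∃ C, ∀ n, ‖c n‖ * R ^ n ≤ C) (z : ℂ) :
    Summable fun n => c n * z ^ n := by
  obtain ⟨C, hC⟩ := hc (2 * (‖z‖ + 1)) (by positivity)
  refine Summable.of_norm_bounded (summable_geometric_two.mul_left C) fun n => ?_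
  calc ‖c n * z ^ n‖ ≤ ‖c n‖ * (‖z‖ + 1) ^ n := by
        rw [norm_mul, norm_pow]; gcongr; linarith
    _ = ‖c n‖ * (2 * (‖z‖ + 1)) ^ n * (1 / 2) ^ n := by
        rw [mul_assoc, ← mul_pow]; ring
    _ ≤ C * (1 / 2) ^ n := by gcongr; exact hC n

theorem summable_succ_mul_mul_pow (hc : ∀ z, Summable fun n => c n * z ^ n) (z : ℂ) :
    Summable fun n : ℕ => (n + 1) * c (n + 1) * z ^ n := by
  have hsum := (summable_nat_add_iff 1).2 (hc ((2 * (‖z‖ + 1) : ℝ) : ℂ)).norm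
  refine Summable.of_norm_bounded hsum fun n => ?_
  have hn : ((n : ℝ) + 1) ≤ 2 ^ (n + 1) := by exact_mod_cast (Nat.lt_two_pow_self (n := n + 1)).le
  have hn' : ‖(n : ℂ) + 1‖ = n + 1 := by exact_mod_cast Complex.norm_natCast (n + 1)
  calc ‖(n + 1) * c (n + 1) * z ^ n‖ = (n + 1) * ‖c (n + 1)‖ * ‖z‖ ^ n := by
        rw [norm_mul, norm_mul, norm_pow, hn']
    _ ≤ 2 ^ (n + 1) * ‖c (n + 1)‖ * (‖z‖ + 1) ^ (n + 1) := by
        gcongr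
        calc ‖z‖ ^ n ≤ (‖z‖ + 1) ^ n := by gcongr; linarith
          _ ≤ (‖z‖ + 1) ^ (n + 1) := pow_le_pow_right₀ (by simp) n.le_succ
    _ = ‖c (n + 1) * ((2 * (‖z‖ + 1) : ℝ) : ℂ) ^ (n + 1)‖ := by
        rw [norm_mul, norm_pow, Complex.norm_real, Real.norm_of_nonneg (by positivity), mul_pow]
        ring

theorem hasDerivAt_tsum_mul_pow (hc : ∀ z, Summable fun n => c n * z ^ n) (z : ℂ) :
    HasDerivAt (fun z => ∑' n, c n * z ^ n) (∑' n : ℕ, (n + 1) * c (n + 1) * z ^ n) z := by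
  have hu := (hc ((‖z‖ + 1 : ℝ) : ℂ)).norm
  have hdiff : ∀ n, DifferentiableOn ℂ (fun w => c n * w ^ n) (Metric.ball 0 (‖z‖ + 1)) :=
    fun n => by fun_prop
  have hle : ∀ n w, w ∈ Metric.ball (0 : ℂ) (‖z‖ + 1) →
      ‖c n * w ^ n‖ ≤ ‖c n * ((‖z‖ + 1 : ℝ) : ℂ) ^ n‖ := fun n w hw => by
    rw [norm_mul, norm_mul, norm_pow, norm_pow, Complex.norm_real,
      Real.norm_of_nonneg (by positivity)]
    have := (mem_ball_zero_iff.1 hw).le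
    gcongr
  have hz : z ∈ Metric.ball (0 : ℂ) (‖z‖ + 1) := by simp
  have hsum := Complex.hasSum_deriv_of_summable_norm hu hdiff Metric.isOpen_ball hle hz
  have hderiv : deriv (fun w => ∑' n, c n * w ^ n) z = ∑' n : ℕ, (n + 1) * c (n + 1) * z ^ n := by
    rw [← hsum.tsum_eq, hsum.summable.tsum_eq_zero_add]
    simp [mul_assoc, mul_comm, mul_left_comm]
  rw [← hderiv]
  exact ((Complex.differentiableOn_tsum_of_summable_norm hu hdiff Metric.isOpen_ball
    hle).differentiableAt (Metric.isOpen_ball.mem_nhds hz)).hasDerivAt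

end EntirePowerSeries

section EntireSolution

/-- Taylor coefficients at `0` of the solution of `f'' = V f` with `f 0 = a₀` and `f' 0 = a₁`, where
`p` are the Taylor coefficients of `V`. -/
noncomputable def schrodingerCoeff (p : ℕ → ℂ) (a₀ a₁ : ℂ) : ℕ → ℂ
  | 0 => a₀
  | 1 => a₁
  | n + 2 => (∑ j : Fin (n + 1), p (n - j) * schrodingerCoeff p a₀ a₁ j) / ((n + 2) * (n + 1))

variable {p : ℕ → ℂ} {a₀ a₁ : ℂ}

theorem schrodingerCoeff_add_two (n : ℕ) :
    (n + 2) * (n + 1) * schrodingerCoeff p a₀ a₁ (n + 2) =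
      ∑ j ∈ Finset.range (n + 1), p (n - j) * schrodingerCoeff p a₀ a₁ j := by
  have h1 : (n : ℂ) + 1 ≠ 0 := by exact_mod_cast n.succ_ne_zero
  have h2 : (n : ℂ) + 2 ≠ 0 := by exact_mod_cast (n + 1).succ_ne_zero
  rw [schrodingerCoeff, mul_div_cancel₀ _ (mul_ne_zero h2 h1),
    Fin.sum_univ_eq_sum_range (fun j => p (n - j) * schrodingerCoeff p a₀ a₁ j)]

theorem norm_schrodingerCoeff_add_two_mul_pow_le {R C : ℝ} (hR : 0 < R)
    (hp : Summable fun n => ‖p n‖ * R ^ n) {n : ℕ}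
    (hn : R ^ 2 * ∑' i, ‖p i‖ * R ^ i ≤ (n + 2) * (n + 1))
    (hC : ∀ j ≤ n, ‖schrodingerCoeff p a₀ a₁ j‖ * R ^ j ≤ C) :
    ‖schrodingerCoeff p a₀ a₁ (n + 2)‖ * R ^ (n + 2) ≤ C := by
  set M := ∑' i, ‖p i‖ * R ^ i
  have hC0 : 0 ≤ C := le_trans (by positivity) (hC 0 n.zero_le)
  have hM : ∑ j ∈ Finset.range (n + 1), ‖p (n - j)‖ * R ^ (n - j) ≤ M := by
    have hreflect := Finset.sum_range_reflect (fun i => ‖p i‖ * R ^ i) (n + 1)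
    simp only [Nat.add_sub_cancel] at hreflect
    exact hreflect.trans_le (hp.sum_le_tsum _ fun i _ => by positivity)
  have hnorm : ‖((n : ℂ) + 2) * (n + 1)‖ = (n + 2) * (n + 1) := by
    exact_mod_cast Complex.norm_natCast ((n + 2) * (n + 1))
  refine le_of_mul_le_mul_left ?_ (by positivity : 0 < ((n : ℝ) + 2) * (n + 1))
  calc (n + 2) * (n + 1) * (‖schrodingerCoeff p a₀ a₁ (n + 2)‖ * R ^ (n + 2))
      = ‖∑ j ∈ Finset.range (n + 1), p (n - j) * schrodingerCoeff p a₀ a₁ j‖ * R ^ (n + 2) := by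
        rw [← schrodingerCoeff_add_two, norm_mul, hnorm, ← mul_assoc]
    _ ≤ (∑ j ∈ Finset.range (n + 1), ‖p (n - j)‖ * ‖schrodingerCoeff p a₀ a₁ j‖) * R ^ (n + 2) := by
        gcongr
        simpa only [norm_mul] using norm_sum_le (Finset.range (n + 1))
          fun j => p (n - j) * schrodingerCoeff p a₀ a₁ j
    _ = R ^ 2 * ∑ j ∈ Finset.range (n + 1),
          ‖p (n - j)‖ * R ^ (n - j) * (‖schrodingerCoeff p a₀ a₁ j‖ * R ^ j) := by
        rw [Finset.sum_mul, Finset.mul_sum]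
        refine Finset.sum_congr rfl fun j hj => ?_
        rw [← Nat.sub_add_cancel (Finset.mem_range_succ_iff.1 hj), Nat.add_sub_cancel]
        ring
    _ ≤ R ^ 2 * ∑ j ∈ Finset.range (n + 1), ‖p (n - j)‖ * R ^ (n - j) * C := by
        gcongr with j hj
        exact hC j (Finset.mem_range_succ_iff.1 hj)
    _ ≤ R ^ 2 * (M * C) := by rw [← Finset.sum_mul]; gcongr
    _ ≤ (n + 2) * (n + 1) * C := by rw [← mul_assoc]; gcongr

theorem exists_norm_schrodingerCoeff_mul_pow_le {R : ℝ} (hR : 0 < R)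
    (hp : Summable fun n => ‖p n‖ * R ^ n) :
    ∃ C, ∀ n, ‖schrodingerCoeff p a₀ a₁ n‖ * R ^ n ≤ C := by
  obtain ⟨N, hN⟩ := exists_nat_ge (R ^ 2 * ∑' i, ‖p i‖ * R ^ i)
  refine ⟨∑ k ∈ Finset.range (N + 2), ‖schrodingerCoeff p a₀ a₁ k‖ * R ^ k, fun n => ?_⟩
  induction n using Nat.strong_induction_on with
  | _ n ih =>
    rcases lt_or_ge n (N + 2) with hn | hn
    · exact Finset.single_le_sum (f := fun k => ‖schrodingerCoeff p a₀ a₁ k‖ * R ^ k)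
        (fun k _ => by positivity) (Finset.mem_range.2 hn)
    · obtain ⟨m, rfl⟩ := Nat.exists_eq_add_of_le' (le_of_add_le_right hn : 2 ≤ n)
      have hNm : (N : ℝ) ≤ m := by exact_mod_cast Nat.le_of_add_le_add_right hn
      exact norm_schrodingerCoeff_add_two_mul_pow_le hR hp (by nlinarith)
        fun j hj => ih j (by omega)

theorem summable_schrodingerCoeff_mul_pow (hp : ∀ z, Summable fun n => p n * z ^ n) (z : ℂ) :
    Summable fun n => schrodingerCoeff p a₀ a₁ n * z ^ n :=
  summable_mul_pow_of_forall_bounded (fun R hR =>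
    exists_norm_schrodingerCoeff_mul_pow_le hR (by simpa [abs_of_pos hR] using (hp R).norm)) z

theorem solvesSchrodinger_tsum (hp : ∀ z, Summable fun n => p n * z ^ n) (a₀ a₁ : ℂ) :
    SolvesSchrodinger (fun z => ∑' n, p n * z ^ n)
      (fun z => ∑' n, schrodingerCoeff p a₀ a₁ n * z ^ n) := by
  have hc := summable_schrodingerCoeff_mul_pow (a₀ := a₀) (a₁ := a₁) hp
  refine .mk_of_hasDerivAt (hasDerivAt_tsum_mul_pow hc) fun z => ?_
  refine (hasDerivAt_tsum_mul_pow (summable_succ_mul_mul_pow hc) z).congr_deriv ?_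
  rw [mul_comm, tsum_mul_tsum_eq_tsum_sum_antidiagonal_of_summable_norm (hc z).norm (hp z).norm]
  refine tsum_congr fun n => ?_
  have hcoeff := schrodingerCoeff_add_two (p := p) (a₀ := a₀) (a₁ := a₁) n
  rw [Finset.Nat.sum_antidiagonal_eq_sum_range_succ
    fun i j => schrodingerCoeff p a₀ a₁ i * z ^ i * (p j * z ^ j)]
  calc (n + 1) * (((n + 1 : ℕ) + 1) * schrodingerCoeff p a₀ a₁ (n + 1 + 1)) * z ^ n
      = (n + 2) * (n + 1) * schrodingerCoeff p a₀ a₁ (n + 2) * z ^ n := by push_cast; ring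
    _ = _ := by
        rw [hcoeff, Finset.sum_mul]
        refine Finset.sum_congr rfl fun j hj => ?_
        rw [← Nat.sub_add_cancel (Finset.mem_range_succ_iff.1 hj), Nat.add_sub_cancel]
        ring

theorem exists_entire_solvesSchrodinger {V : ℂ → ℂ} (hV : Differentiable ℂ V) (a₀ a₁ : ℂ) :
    ∃ f, SolvesSchrodinger V f ∧ f 0 = a₀ ∧ deriv f 0 = a₁ := by
  set p : ℕ → ℂ := fun n => (n.factorial : ℂ)⁻¹ * iteratedDeriv n V 0
  have hV' : ∀ z, HasSum (fun n => p n * z ^ n) (V z) := fun z => by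
    simpa [p, mul_comm, mul_left_comm] using Complex.hasSum_taylorSeries_of_entire hV 0 z
  have hp := fun z => (hV' z).summable
  have hsol := solvesSchrodinger_tsum hp a₀ a₁
  rw [funext fun z => (hV' z).tsum_eq] at hsol
  refine ⟨_, hsol, ?_, ?_⟩
  · rw [tsum_eq_single 0 fun n hn => by simp [hn]]
    simp [schrodingerCoeff]
  · rw [(hasDerivAt_tsum_mul_pow (summable_schrodingerCoeff_mul_pow hp) 0).deriv,
      tsum_eq_single 0 fun n hn => by simp [hn]]
    simp [schrodingerCoeff]

end EntireSolution

/-- A pair of WKB amplitudes `H` (of the recessive exponential) and `K` (of the dominant one) on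
`[0, ∞)`, coupled by a small coefficient `v`. Here `E` is the recessive exponential over the
dominant one, so that `‖E‖` decreases; `ε` bounds the total variation of `∫ v`; and the last field
says that the dominant exponential is absent at infinity. -/
structure IsRecessivePair (E v H K : ℝ → ℂ) (ε : ℝ) : Prop where
  continuousAt : ∀ s, 0 ≤ s → ContinuousAt H s
  ne_zero : ∀ s, 0 ≤ s → E s ≠ 0
  norm_anti : ∀ s t, 0 ≤ s → s ≤ t → ‖E t‖ ≤ ‖E s‖
  hasDerivAt_add : ∀ s, 0 ≤ s → HasDerivAt (fun s => H s + K s) (v s * H s) s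
  hasDerivAt_mul : ∀ s, 0 ≤ s → HasDerivAt (fun s => E s * K s) (v s * (E s * H s)) s
  exists_majorant : ∃ B B' : ℝ → ℝ, (∀ s, 0 ≤ s → HasDerivAt B (B' s) s ∧ ‖v s‖ ≤ B' s) ∧
    ∀ s t, 0 ≤ s → s ≤ t → B t - B s ≤ ε
  nonneg : 0 ≤ ε
  le_eighth : ε ≤ 1 / 8
  frequently_lt : ∀ δ > 0, ∃ᶠ s in atTop, ‖E s * K s‖ < δ

namespace IsRecessivePair

variable {E v H K : ℝ → ℂ} {ε s t m : ℝ} (h : IsRecessivePair E v H K ε)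
include h

theorem norm_sub_le {g w : ℝ → ℂ} (hs : 0 ≤ s) (hst : s ≤ t)
    (hg : ∀ x ∈ Icc s t, HasDerivAt g (v x * w x) x) (hw : ∀ x ∈ Icc s t, ‖w x‖ ≤ m) :
    ‖g t - g s‖ ≤ ε * m := by
  obtain ⟨B, B', hB, hBε⟩ := h.exists_majorant
  have hm : 0 ≤ m := (norm_nonneg _).trans (hw s (left_mem_Icc.2 hst))
  have key := norm_sub_le_sub_of_norm_deriv_le (B := fun x => B x * m) hst hg
    (fun x hx => (hB x (hs.trans hx.1)).1.mul_const m) fun x hx => by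
      have hv := (hB x (hs.trans hx.1)).2
      rw [norm_mul]
      exact mul_le_mul hv (hw x hx) (norm_nonneg _) ((norm_nonneg _).trans hv)
  calc ‖g t - g s‖ ≤ (B t - B s) * m := by rw [sub_mul]; exact key
    _ ≤ ε * m := by gcongr; exact hBε s t hs hst

theorem norm_add_sub_add_le (hs : 0 ≤ s) (hst : s ≤ t) (hm : ∀ x ∈ Icc s t, ‖H x‖ ≤ m) :
    ‖H t + K t - (H s + K s)‖ ≤ ε * m :=
  h.norm_sub_le hs hst (fun x hx => h.hasDerivAt_add x (hs.trans hx.1)) hm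

theorem norm_mul_sub_mul_le (hs : 0 ≤ s) (hst : s ≤ t) (hm : ∀ x ∈ Icc s t, ‖E x * H x‖ ≤ m) :
    ‖E t * K t - E s * K s‖ ≤ ε * m :=
  h.norm_sub_le hs hst (fun x hx => h.hasDerivAt_mul x (hs.trans hx.1)) hm

theorem norm_mul_le (hs : 0 ≤ s) (hst : s ≤ t) (hm : ∀ x ∈ Icc s t, ‖H x‖ ≤ m) :
    ‖E s‖ * ‖K s‖ ≤ ‖E t * K t‖ + ‖E s‖ * (ε * m) := by
  have hinc := h.norm_mul_sub_mul_le (m := ‖E s‖ * m) hs hst fun x hx => by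
    rw [norm_mul]
    exact mul_le_mul (h.norm_anti s x hs hx.1) (hm x hx) (norm_nonneg _) (norm_nonneg _)
  rw [← norm_mul]
  linarith [norm_le_norm_add_norm_sub (E t * K t) (E s * K s)]

theorem norm_mul_le_two_mul (hs : 0 ≤ s) (hst : s ≤ t)
    (hK : ∀ x ∈ Icc s t, ‖H x‖ ≤ 2 * ‖K x‖) : ‖E s * K s‖ ≤ 2 * ‖E t * K t‖ := by
  have hcont : ContinuousOn (fun x => ‖E x * K x‖) (Icc s t) := fun x hx =>
    (h.hasDerivAt_mul x (hs.trans hx.1)).continuousAt.norm.continuousWithinAt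
  obtain ⟨x, hx, hmax⟩ := isCompact_Icc.exists_isMaxOn ⟨s, left_mem_Icc.2 hst⟩ hcont
  have hinc := h.norm_mul_sub_mul_le (m := 2 * ‖E x * K x‖) (hs.trans hx.1) hx.2 fun y hy => by
    have hy' : y ∈ Icc s t := ⟨hx.1.trans hy.1, hy.2⟩
    have hEH := mul_le_mul_of_nonneg_left (hK y hy') (norm_nonneg (E y))
    have hEK : ‖E y‖ * ‖K y‖ ≤ ‖E x * K x‖ := by rw [← norm_mul]; exact hmax hy'
    rw [norm_mul]
    linarith
  have hs_le : ‖E s * K s‖ ≤ ‖E x * K x‖ := hmax (left_mem_Icc.2 hst)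
  nlinarith [norm_le_norm_add_norm_sub (E t * K t) (E x * K x), h.le_eighth,
    norm_nonneg (E x * K x)]

theorem exists_norm_le (hs : 0 ≤ s) : ∃ t, s ≤ t ∧ ‖K t‖ ≤ ‖H t + K t‖ := by
  by_contra! hdom
  have hH : ∀ x, s ≤ x → ‖H x‖ ≤ 2 * ‖K x‖ := fun x hx => by
    linarith [hdom x hx, norm_le_add_norm_add (H x) (K x)]
  have hpos : 0 < ‖E s * K s‖ := by
    rw [norm_mul]
    exact mul_pos (norm_pos_iff.2 (h.ne_zero s hs)) ((norm_nonneg _).trans_lt (hdom s le_rfl))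
  obtain ⟨t, ht, hst⟩ := (h.frequently_lt _ (half_pos hpos)).and_eventually
    (eventually_ge_atTop s) |>.exists
  linarith [h.norm_mul_le_two_mul hs hst fun x hx => hH x hx.1]

theorem norm_recessive_le (hs : 0 ≤ s) : ‖H s‖ ≤ 4 * ‖H 0 + K 0‖ := by
  obtain ⟨t, hst, hKt⟩ := h.exists_norm_le hs
  have ht : 0 ≤ t := hs.trans hst
  have hcont : ContinuousOn (fun x => ‖H x‖) (Icc 0 t) := fun x hx =>
    (h.continuousAt x hx.1).norm.continuousWithinAt
  obtain ⟨x, hx, hmax⟩ := isCompact_Icc.exists_isMaxOn ⟨0, left_mem_Icc.2 ht⟩ hcont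
  have hEpos : 0 < ‖E x‖ := norm_pos_iff.2 (h.ne_zero x hx.1)
  have hsum : ∀ y ∈ Icc 0 t, ‖H y + K y‖ ≤ ‖H 0 + K 0‖ + ε * ‖H x‖ := fun y hy => by
    linarith [norm_le_norm_add_norm_sub' (H y + K y) (H 0 + K 0),
      h.norm_add_sub_add_le le_rfl hy.1 fun z hz => hmax ⟨hz.1, hz.2.trans hy.2⟩]
  have hEKt : ‖E t * K t‖ ≤ ‖E x‖ * (‖H 0 + K 0‖ + ε * ‖H x‖) := by
    rw [norm_mul]
    exact mul_le_mul (h.norm_anti x t hx.1 hx.2) (hKt.trans (hsum t ⟨ht, le_rfl⟩))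
      (norm_nonneg _) hEpos.le
  have hKx : ‖K x‖ ≤ ‖H 0 + K 0‖ + 2 * (ε * ‖H x‖) := by
    refine le_of_mul_le_mul_left ?_ hEpos
    linarith [h.norm_mul_le hx.1 hx.2 fun y hy => hmax ⟨hx.1.trans hy.1, hy.2⟩]
  have hxs : ‖H s‖ ≤ ‖H x‖ := hmax ⟨hs, hst⟩
  have hεx : ε * ‖H x‖ ≤ 1 / 8 * ‖H x‖ := by gcongr; exact h.le_eighth
  linarith [hsum x hx, norm_nonneg (H 0 + K 0), norm_le_add_norm_add (H x) (K x)]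

theorem norm_dominant_le (hs : 0 ≤ s) : ‖K s‖ ≤ 4 * ε * ‖H 0 + K 0‖ := by
  have hEpos : 0 < ‖E s‖ := norm_pos_iff.2 (h.ne_zero s hs)
  refine le_of_mul_le_mul_left ?_ hEpos
  refine le_of_forall_pos_le_add fun δ hδ => ?_
  obtain ⟨t, ht, hst⟩ := (h.frequently_lt δ hδ).and_eventually (eventually_ge_atTop s) |>.exists
  linarith [h.norm_mul_le hs hst fun x hx => h.norm_recessive_le (hs.trans hx.1)]

theorem norm_add_le_two_mul : ‖H 0 + K 0‖ ≤ 2 * ‖H 0‖ := by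
  have := h.norm_dominant_le le_rfl
  nlinarith [norm_add_le (H 0) (K 0), h.le_eighth, norm_nonneg (H 0 + K 0)]

theorem norm_dominant_le_initial (hs : 0 ≤ s) : ‖K s‖ ≤ 8 * ε * ‖H 0‖ := by
  nlinarith [h.norm_dominant_le hs, h.norm_add_le_two_mul, h.nonneg]

theorem norm_recessive_sub_le (hs : 0 ≤ s) : ‖H s - H 0‖ ≤ 24 * ε * ‖H 0‖ := by
  have hinc := h.norm_add_sub_add_le le_rfl hs fun x hx => h.norm_recessive_le hx.1
  have hεA := mul_le_mul_of_nonneg_left h.norm_add_le_two_mul h.nonneg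
  calc ‖H s - H 0‖ = ‖H s + K s - (H 0 + K 0) - K s + K 0‖ := by congr 1; ring
    _ ≤ ‖H s + K s - (H 0 + K 0)‖ + ‖K s‖ + ‖K 0‖ :=
        (norm_add_le _ _).trans (by gcongr; exact _root_.norm_sub_le _ _)
    _ ≤ 24 * ε * ‖H 0‖ := by
        linarith [h.norm_dominant_le_initial hs, h.norm_dominant_le_initial le_rfl]

end IsRecessivePair

section FourthRoot

/-- The principal fourth root on `ℂ`, except that its value at `0` is `1`. -/
noncomputable def fourthRoot (z : ℂ) : ℂ := Complex.exp (Complex.log z / 4)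

/-- The WKB action `∫ z ^ (3 / 2) = (2 / 5) z ^ (5 / 2)` of the potential `z ^ 3`. -/
noncomputable def cubicAction (z : ℂ) : ℂ := 2 / 5 * fourthRoot z ^ 10

variable {z : ℂ}

theorem fourthRoot_ne_zero (z : ℂ) : fourthRoot z ≠ 0 := Complex.exp_ne_zero _

theorem fourthRoot_pow_four (hz : z ≠ 0) : fourthRoot z ^ 4 = z := by
  rw [fourthRoot, ← Complex.exp_nat_mul,
    show ((4 : ℕ) : ℂ) * (Complex.log z / 4) = Complex.log z by push_cast; ring, Complex.exp_log hz]

theorem norm_fourthRoot_pow_four (hz : z ≠ 0) : ‖fourthRoot z‖ ^ 4 = ‖z‖ := by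
  rw [← norm_pow, fourthRoot_pow_four hz]

theorem one_le_norm_fourthRoot (hz : 1 ≤ ‖z‖) : 1 ≤ ‖fourthRoot z‖ := by
  rw [← norm_fourthRoot_pow_four (norm_pos_iff.1 (one_pos.trans_le hz))] at hz
  exact (one_le_pow_iff_of_nonneg (norm_nonneg _) (by norm_num)).1 hz

theorem norm_fourthRoot_pow_six_le (hz : 1 ≤ ‖z‖) : ‖fourthRoot z‖ ^ 6 ≤ ‖z‖ ^ 2 := by
  rw [← norm_fourthRoot_pow_four (norm_pos_iff.1 (one_pos.trans_le hz)), ← pow_mul]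
  exact pow_le_pow_right₀ (one_le_norm_fourthRoot hz) (by norm_num)

theorem hasDerivAt_fourthRoot (hz : z ∈ Complex.slitPlane) :
    HasDerivAt fourthRoot (1 / (4 * fourthRoot z ^ 3)) z := by
  refine ((Complex.hasDerivAt_log hz).div_const 4).cexp.congr_deriv ?_
  have h4 := fourthRoot_pow_four (Complex.slitPlane_ne_zero hz)
  have h0 := fourthRoot_ne_zero z
  change fourthRoot z * (z⁻¹ / 4) = _
  nth_rewrite 2 [← h4]
  field_simp

theorem hasDerivAt_cubicAction (hz : z ∈ Complex.slitPlane) :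
    HasDerivAt cubicAction (fourthRoot z ^ 6) z := by
  refine (((hasDerivAt_fourthRoot hz).pow 10).const_mul (2 / 5)).congr_deriv ?_
  have h0 := fourthRoot_ne_zero z
  field_simp
  norm_num

theorem im_fourthRoot_pow_six_nonneg (hre : 0 ≤ z.re) (him : 0 ≤ z.im) :
    0 ≤ (fourthRoot z ^ 6).im := by
  have harg₀ : 0 ≤ z.arg := Complex.arg_nonneg_iff.2 him
  have harg₁ : z.arg ≤ Real.pi / 2 := Complex.arg_le_pi_div_two_iff.2 (Or.inl hre)
  have harg : (((6 : ℕ) : ℂ) * (Complex.log z / 4)).im = 3 / 2 * z.arg := by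
    rw [show ((6 : ℕ) : ℂ) * (Complex.log z / 4) = ((3 / 2 : ℝ) : ℂ) * Complex.log z by
      push_cast; ring, Complex.im_ofReal_mul, Complex.log_im]
  rw [fourthRoot, ← Complex.exp_nat_mul, Complex.exp_im, harg]
  exact mul_nonneg (Real.exp_pos _).le
    (Real.sin_nonneg_of_nonneg_of_le_pi (by linarith) (by linarith [Real.pi_pos]))

theorem re_cubicAction_polar {t θ : ℝ} (ht : 0 < t) (hθ : θ ∈ Ioc (-Real.pi) Real.pi) :
    (cubicAction (t * Complex.exp (θ * Complex.I))).re
      = 2 / 5 * (t ^ 2 * √t) * Real.cos (5 / 2 * θ) := by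
  have hlog : Complex.log (t * Complex.exp (θ * Complex.I)) = Real.log t + θ * Complex.I := by
    rw [Complex.log_ofReal_mul ht (Complex.exp_ne_zero _),
      Complex.log_exp (by simpa using hθ.1) (by simpa using hθ.2)]
  have hpow : Real.exp (5 / 2 * Real.log t) = t ^ 2 * √t := by
    rw [mul_comm, ← Real.rpow_def_of_pos ht, Real.sqrt_eq_rpow, ← Real.rpow_natCast,
      ← Real.rpow_add ht]
    norm_num
  rw [cubicAction, fourthRoot, hlog, ← Complex.exp_nat_mul,
    show ((10 : ℕ) : ℂ) * ((Real.log t + θ * Complex.I) / 4)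
      = ((5 / 2 * Real.log t : ℝ) : ℂ) + ((5 / 2 * θ : ℝ) : ℂ) * Complex.I by push_cast; ring,
    show (2 / 5 : ℂ) = ((2 / 5 : ℝ) : ℂ) by push_cast; rfl, Complex.re_ofReal_mul, Complex.exp_re]
  simp [hpow, mul_assoc]

end FourthRoot

section Amplitudes

/-- The amplitude of the recessive WKB exponential in a solution `f` of `f'' = (z ^ 3 + lam) f`. -/
noncomputable def recessiveAmplitude (f : ℂ → ℂ) (z : ℂ) : ℂ :=
  f z * fourthRoot z ^ 3 * Complex.exp (-cubicAction z)

/-- The logarithmic derivative of the recessive WKB solution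
`z ^ (-3 / 4) * exp (cubicAction z)`. -/
noncomputable def wkbLogDeriv (z : ℂ) : ℂ := fourthRoot z ^ 6 - 3 / 4 * (fourthRoot z ^ 4)⁻¹

/-- The part of `recessiveAmplitude` that belongs to the dominant WKB exponential: the defect in
the first order equation satisfied by the recessive WKB solution. -/
noncomputable def dominantAmplitude (f : ℂ → ℂ) (z : ℂ) : ℂ :=
  1 / 2 * (fourthRoot z ^ 3)⁻¹ * Complex.exp (-cubicAction z)
    * (deriv f z - wkbLogDeriv z * f z)

/-- The coefficient through which the recessive amplitude feeds the dominant one. -/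
noncomputable def amplitudeCoupling (lam z : ℂ) : ℂ :=
  1 / 2 * (lam - 21 / 16 * (fourthRoot z ^ 8)⁻¹) * (fourthRoot z ^ 6)⁻¹

variable {lam z : ℂ} {f : ℂ → ℂ}

theorem SolvesSchrodinger.hasDerivAt_recessiveAmplitude {V : ℂ → ℂ} (hf : SolvesSchrodinger V f)
    (hz : z ∈ Complex.slitPlane) :
    HasDerivAt (recessiveAmplitude f) (2 * fourthRoot z ^ 6 * dominantAmplitude f z) z := by
  refine (((hf.hasDerivAt z).mul ((hasDerivAt_fourthRoot hz).pow 3)).mul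
    (hasDerivAt_cubicAction hz).neg.cexp).congr_deriv ?_
  have h0 := fourthRoot_ne_zero z
  simp only [dominantAmplitude, wkbLogDeriv, Pi.mul_apply, Pi.pow_apply, Pi.neg_apply]
  field_simp
  push_cast
  ring

theorem SolvesSchrodinger.hasDerivAt_dominantAmplitude
    (hf : SolvesSchrodinger (fun z => z ^ 3 + lam) f) (hz : z ∈ Complex.slitPlane) :
    HasDerivAt (dominantAmplitude f) (-(2 * fourthRoot z ^ 6 * dominantAmplitude f z)
      + amplitudeCoupling lam z * recessiveAmplitude f z) z := by
  have h0 := fourthRoot_ne_zero z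
  have hr := hasDerivAt_fourthRoot hz
  have hinv : ∀ n, HasDerivAt (fun z => (fourthRoot z ^ n)⁻¹) _ z := fun n =>
    (hr.pow n).inv (pow_ne_zero n h0)
  have hpre : HasDerivAt
      (fun z => 1 / 2 * (fourthRoot z ^ 3)⁻¹ * Complex.exp (-cubicAction z)) _ z :=
    ((hinv 3).const_mul (1 / 2)).mul (hasDerivAt_cubicAction hz).neg.cexp
  have hlog : HasDerivAt wkbLogDeriv _ z :=
    (hr.pow 6).sub ((hinv 4).const_mul (3 / 4))
  refine (hpre.mul ((hf.hasDerivAt_deriv z).sub (hlog.mul (hf.hasDerivAt z)))).congr_deriv ?_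
  have hcube : z ^ 3 = fourthRoot z ^ 12 := by
    rw [show fourthRoot z ^ 12 = (fourthRoot z ^ 4) ^ 3 by ring,
      fourthRoot_pow_four (Complex.slitPlane_ne_zero hz)]
  simp only [dominantAmplitude, wkbLogDeriv, recessiveAmplitude, amplitudeCoupling,
    Pi.mul_apply, Pi.sub_apply, Pi.neg_apply, Pi.pow_apply, hcube]
  generalize fourthRoot z = r at *
  field_simp
  push_cast
  ring

theorem norm_amplitudeCoupling_le (hz : 1 ≤ ‖z‖) :
    ‖amplitudeCoupling lam z‖ ≤ (‖lam‖ + 2) / 2 * (‖fourthRoot z‖ ^ 6)⁻¹ := by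
  have hinv : (‖fourthRoot z‖ ^ 8)⁻¹ ≤ 1 :=
    inv_le_one_of_one_le₀ (one_le_pow₀ (one_le_norm_fourthRoot hz))
  have hsub : ‖lam - 21 / 16 * (fourthRoot z ^ 8)⁻¹‖ ≤ ‖lam‖ + 2 := by
    refine (norm_sub_le _ _).trans ?_
    rw [norm_mul, norm_inv, norm_pow, show ‖(21 / 16 : ℂ)‖ = 21 / 16 by norm_num]
    linarith
  rw [amplitudeCoupling, norm_mul, norm_mul, norm_inv, norm_pow,
    show ‖(1 / 2 : ℂ)‖ = 1 / 2 by norm_num]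
  calc 1 / 2 * ‖lam - 21 / 16 * (fourthRoot z ^ 8)⁻¹‖ * (‖fourthRoot z‖ ^ 6)⁻¹
      ≤ 1 / 2 * (‖lam‖ + 2) * (‖fourthRoot z‖ ^ 6)⁻¹ := by gcongr
    _ = (‖lam‖ + 2) / 2 * (‖fourthRoot z‖ ^ 6)⁻¹ := by ring

theorem norm_recessiveAmplitude (f : ℂ → ℂ) (z : ℂ) :
    ‖recessiveAmplitude f z‖ =
      ‖f z‖ * (‖fourthRoot z‖ ^ 3 * Real.exp (-(cubicAction z).re)) := by
  rw [recessiveAmplitude, norm_mul, norm_mul, norm_pow, Complex.norm_exp, Complex.neg_re, mul_assoc]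

theorem norm_wkbLogDeriv_le (hz : 1 ≤ ‖z‖) : ‖wkbLogDeriv z‖ ≤ 2 * ‖z‖ ^ 2 := by
  refine (norm_sub_le _ _).trans ?_
  have hinv : (‖fourthRoot z‖ ^ 4)⁻¹ ≤ 1 :=
    inv_le_one_of_one_le₀ (one_le_pow₀ (one_le_norm_fourthRoot hz))
  rw [norm_mul, norm_inv, norm_pow, norm_pow, show ‖(3 / 4 : ℂ)‖ = 3 / 4 by norm_num]
  linarith [norm_fourthRoot_pow_six_le hz, one_le_pow₀ hz (n := 2)]

theorem norm_le_recessiveAmplitude_mul_exp (hz : 1 ≤ ‖z‖) :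
    ‖f z‖ ≤ ‖recessiveAmplitude f z‖ * Real.exp (cubicAction z).re := by
  rw [norm_recessiveAmplitude, mul_assoc, mul_assoc, ← Real.exp_add, neg_add_cancel, Real.exp_zero,
    mul_one]
  exact le_mul_of_one_le_right (norm_nonneg _) (one_le_pow₀ (one_le_norm_fourthRoot hz))

theorem norm_deriv_le_amplitudes_mul_exp (hz : 1 ≤ ‖z‖) :
    ‖deriv f z‖ ≤ 2 * ‖z‖ ^ 2 * (‖recessiveAmplitude f z‖ + ‖dominantAmplitude f z‖)
      * Real.exp (cubicAction z).re := by
  have hderiv : deriv f z = wkbLogDeriv z * f z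
      + 2 * fourthRoot z ^ 3 * (dominantAmplitude f z * Complex.exp (cubicAction z)) := by
    have h0 := fourthRoot_ne_zero z
    rw [dominantAmplitude, Complex.exp_neg]
    field_simp [Complex.exp_ne_zero]
    ring
  have hcube : ‖fourthRoot z‖ ^ 3 ≤ ‖z‖ ^ 2 :=
    (pow_le_pow_right₀ (one_le_norm_fourthRoot hz) (by norm_num)).trans
      (norm_fourthRoot_pow_six_le hz)
  calc ‖deriv f z‖ ≤ ‖wkbLogDeriv z‖ * ‖f z‖ + 2 * ‖fourthRoot z‖ ^ 3
        * (‖dominantAmplitude f z‖ * Real.exp (cubicAction z).re) := by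
        rw [hderiv]
        refine (norm_add_le _ _).trans_eq ?_
        simp only [norm_mul, norm_pow, Complex.norm_exp, Complex.norm_ofNat]
    _ ≤ 2 * ‖z‖ ^ 2 * (‖recessiveAmplitude f z‖ * Real.exp (cubicAction z).re) + 2 * ‖z‖ ^ 2
        * (‖dominantAmplitude f z‖ * Real.exp (cubicAction z).re) := by
        gcongr
        · exact norm_wkbLogDeriv_le hz
        · exact norm_le_recessiveAmplitude_mul_exp hz
    _ = _ := by ring

end Amplitudes

section Decay

variable {V f : ℂ → ℂ} {lam : ℂ}

theorem SolvesSchrodinger.energy_segment_le (hf : SolvesSchrodinger V f) (z₀ : ℂ) {R M : ℝ}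
    (hR : 0 ≤ R) (hM : 0 ≤ M) (hV : ∀ x ∈ Icc 0 R, ‖V (z₀ + x)‖ ≤ M ^ 2) :
    ‖deriv f (z₀ + R)‖ ^ 2 + M ^ 2 * ‖f (z₀ + R)‖ ^ 2 ≤
      (‖deriv f z₀‖ ^ 2 + M ^ 2 * ‖f z₀‖ ^ 2) * Real.exp (2 * M * R) := by
  have h := (hf.comp_line z₀ 1).energy_le hR hM fun x hx => by simpa using hV x hx
  rw [hf.deriv_comp_line] at h
  simpa using h

theorem eventually_norm_cube_add_le (lam : ℂ) (R : ℝ) :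
    ∀ᶠ s : ℝ in atTop, ∀ x ∈ Icc 0 R, ‖(Complex.I * s + x) ^ 3 + lam‖ ≤ (s ^ 2) ^ 2 := by
  filter_upwards [eventually_ge_atTop R, eventually_ge_atTop ‖lam‖, eventually_ge_atTop 9]
    with s hR hlam hs x hx
  have hbase : ‖Complex.I * s + x‖ ≤ 2 * s := by
    refine (norm_add_le _ _).trans ?_
    rw [norm_mul, Complex.norm_I, Complex.norm_of_nonneg hx.1, Complex.norm_of_nonneg (by linarith)]
    linarith [hx.2]
  calc ‖(Complex.I * s + x) ^ 3 + lam‖ ≤ ‖Complex.I * s + x‖ ^ 3 + ‖lam‖ := by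
        rw [← norm_pow]; exact norm_add_le _ _
    _ ≤ (2 * s) ^ 3 + s ^ 3 := by
        gcongr
        exact hlam.trans (le_self_pow₀ (by linarith) (by norm_num))
    _ = 9 * s ^ 3 := by ring
    _ ≤ s * s ^ 3 := by gcongr
    _ = (s ^ 2) ^ 2 := by ring

theorem sq_norm_one_sub_I : ‖1 - Complex.I‖ ^ 2 = 2 := by
  rw [Complex.sq_norm, Complex.normSq_apply]
  norm_num

theorem eventually_sq_le_re_mul_cubicPotential (lam : ℂ) (k : ℝ) :
    ∀ᶠ s : ℝ in atTop, (‖1 - Complex.I‖ * (k * (2 * s))) ^ 2 ≤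
      ((1 - Complex.I) * (Complex.I ^ 2 * ((0 + Complex.I * s) ^ 3 + lam))).re := by
  filter_upwards [eventually_ge_atTop (8 * k ^ 2 + |lam.re + lam.im|), eventually_ge_atTop 1]
    with s hs hs1
  have hre : ((1 - Complex.I) * (Complex.I ^ 2 * ((0 + Complex.I * s) ^ 3 + lam))).re =
      s ^ 3 - (lam.re + lam.im) := by
    simp [pow_succ]; ring
  rw [hre, mul_pow, sq_norm_one_sub_I]
  have hmul := mul_le_mul_of_nonneg_right hs (sq_nonneg s)
  have habs : lam.re + lam.im ≤ |lam.re + lam.im| * s ^ 2 :=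
    (le_abs_self _).trans (le_mul_of_one_le_right (abs_nonneg _) (one_le_pow₀ hs1))
  linarith

/-- The parametrization of the vertical line through the real point `R`. -/
noncomputable def verticalLine (R s : ℝ) : ℂ := R + Complex.I * s

variable (hf : SolvesSchrodinger (fun z => z ^ 3 + lam) f)
  (hi : IntegrableOn (fun s : ℝ => ‖f (Complex.I * s)‖ ^ 2) (Ioi 0))
include hf hi

-- The direction `1 - I` turns `V = I s ^ 3 - lam` into a potential with real part about `s ^ 3`.
theorem frequently_imaginaryAxis_lt {k : ℝ} (hk : 0 ≤ k) {ε : ℝ} (hε : 0 < ε) :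
    ∃ᶠ s : ℝ in atTop, (‖deriv f (Complex.I * s)‖ ^ 2 + (s ^ 2) ^ 2 * ‖f (Complex.I * s)‖ ^ 2)
      * Real.exp (k * s ^ 2) < ε := by
  obtain ⟨a, ha⟩ := eventually_atTop.1 ((eventually_sq_le_re_mul_cubicPotential lam (k + 1)).and
    (eventually_ge_atTop 0))
  have hweak := (hf.comp_line 0 Complex.I).frequently_mul_exp_lt (c := 1 - Complex.I) (by simp)
    (κ := fun s => (k + 1) * s ^ 2) (fun s => by simpa using (hasDerivAt_pow 2 s).const_mul (k + 1))
    (fun s hs => (ha s hs).1) (by simpa using hi.mono_set (Ioi_subset_Ioi (ha a le_rfl).2)) hε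
  simp only [hf.deriv_comp_line] at hweak
  refine (hweak.and_eventually (eventually_ge_atTop a)).mono fun s ⟨hlt, hs⟩ => hlt.trans_le' ?_
  set W := ((1 - Complex.I) * (Complex.I ^ 2 * ((0 + Complex.I * s) ^ 3 + lam))).re
  have hW : s ^ 2 ≤ W := by
    refine le_trans ?_ (ha s hs).1
    rw [mul_pow, sq_norm_one_sub_I]
    nlinarith [mul_nonneg hk (sq_nonneg s), mul_nonneg (sq_nonneg k) (sq_nonneg s)]
  have hW₀ : 0 ≤ W := (sq_nonneg s).trans hW
  have hexp : s ^ 2 ≤ Real.exp (s ^ 2) := by linarith [Real.add_one_le_exp (s ^ 2)]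
  have hone : 1 ≤ Real.exp (s ^ 2) := Real.one_le_exp (sq_nonneg s)
  rw [norm_mul, Complex.norm_I, one_mul, zero_add, add_one_mul, Real.exp_add,
    mul_comm (Real.exp _), ← mul_assoc]
  refine mul_le_mul_of_nonneg_right ?_ (Real.exp_pos _).le
  rw [add_mul]
  refine add_le_add (le_mul_of_one_le_right (sq_nonneg _) hone) ?_
  rw [mul_right_comm, sq (s ^ 2)]
  gcongr

theorem frequently_verticalLine_lt {R : ℝ} (hR : 0 ≤ R) {ε : ℝ} (hε : 0 < ε) :
    ∃ᶠ s : ℝ in atTop, ‖deriv f (verticalLine R s)‖ ^ 2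
      + (s ^ 2) ^ 2 * ‖f (verticalLine R s)‖ ^ 2 < ε := by
  refine ((frequently_imaginaryAxis_lt hf hi (mul_nonneg zero_le_two hR) hε).and_eventually
    (eventually_norm_cube_add_le lam R)).mono fun s ⟨hlt, hV⟩ => hlt.trans_le' ?_
  rw [verticalLine, add_comm (R : ℂ), mul_right_comm 2 R]
  exact hf.energy_segment_le (Complex.I * s) hR (sq_nonneg s) hV

end Decay

section VerticalLine

variable {R s : ℝ} {lam : ℂ} {f : ℂ → ℂ}

@[simp] theorem verticalLine_re (R s : ℝ) : (verticalLine R s).re = R := by simp [verticalLine]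

@[simp] theorem verticalLine_im (R s : ℝ) : (verticalLine R s).im = s := by simp [verticalLine]

theorem verticalLine_re_im (z : ℂ) : verticalLine z.re z.im = z := Complex.ext (by simp) (by simp)

theorem verticalLine_zero (R : ℝ) : verticalLine R 0 = R := by simp [verticalLine]

theorem verticalLine_mem_slitPlane (hR : 0 < R) (s : ℝ) : verticalLine R s ∈ Complex.slitPlane :=
  Or.inl (by simpa)

theorem sq_norm_verticalLine (R s : ℝ) : ‖verticalLine R s‖ ^ 2 = R ^ 2 + s ^ 2 := by
  rw [Complex.sq_norm, Complex.normSq_apply, verticalLine_re, verticalLine_im]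
  ring

theorem one_le_norm_verticalLine (hR : 1 ≤ R) (s : ℝ) : 1 ≤ ‖verticalLine R s‖ := by
  simpa using (hR.trans (le_abs_self R)).trans
    ((congrArg abs (verticalLine_re R s)).ge.trans (Complex.abs_re_le_norm (verticalLine R s)))

theorem hasDerivAt_comp_verticalLine {g : ℂ → ℂ} {g' : ℂ}
    (h : HasDerivAt g g' (verticalLine R s)) :
    HasDerivAt (fun s => g (verticalLine R s)) (g' * Complex.I) s := by
  have hline : HasDerivAt (verticalLine R) Complex.I s := by
    unfold verticalLine
    simpa using ((hasDerivAt_id s).ofReal_comp.const_mul Complex.I).const_add (R : ℂ)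
  exact h.comp s hline

theorem antitoneOn_re_cubicAction (hR : 0 < R) :
    AntitoneOn (fun s => (cubicAction (verticalLine R s)).re) (Ici 0) := by
  have hmono := monotoneOn_of_hasDerivAt_nonneg (convex_Ici 0)
    (g := fun s => -(cubicAction (verticalLine R s)).re)
    (g' := fun s => (fourthRoot (verticalLine R s) ^ 6).im) (fun s _ => ?_) fun s hs =>
      im_fourthRoot_pow_six_nonneg (by simpa using hR.le) (by simpa using hs)
  · exact fun s hs t ht hst => neg_le_neg_iff.1 (hmono hs ht hst)
  · have hS := hasDerivAt_comp_verticalLine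
      (hasDerivAt_cubicAction (verticalLine_mem_slitPlane hR s))
    have hre := (Complex.reCLM.hasFDerivAt.comp_hasDerivAt s hS).neg
    simpa using! hre

theorem sqrt_pow_three_le (hR : 0 < R) (hs : 0 ≤ s) :
    √(R + s) ^ 3 ≤ 8 * ‖fourthRoot (verticalLine R s)‖ ^ 6 := by
  have hsqrt := Real.sq_sqrt (add_pos_of_pos_of_nonneg hR hs).le
  have hnorm := norm_fourthRoot_pow_four
    (Complex.slitPlane_ne_zero (verticalLine_mem_slitPlane hR s))
  set y := √(R + s)
  set ρ := ‖fourthRoot (verticalLine R s)‖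
  have hy : y ^ 2 ≤ 2 * ρ ^ 4 := by
    rw [hsqrt, hnorm, ← pow_le_pow_iff_left₀ (by positivity) (by positivity) two_ne_zero, mul_pow,
      sq_norm_verticalLine]
    nlinarith [sq_nonneg (R - s)]
  have hle : y ≤ 2 * ρ ^ 2 := by
    rw [← pow_le_pow_iff_left₀ (Real.sqrt_nonneg _) (by positivity) two_ne_zero]
    nlinarith
  calc y ^ 3 ≤ (2 * ρ ^ 2) ^ 3 := by gcongr
    _ = 8 * ρ ^ 6 := by ring

theorem norm_amplitudeCoupling_verticalLine_le (hR : 1 ≤ R) (hs : 0 ≤ s) :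
    ‖amplitudeCoupling lam (verticalLine R s)‖ ≤ 8 * (‖lam‖ + 2) / (2 * √(R + s) ^ 3) := by
  have : 0 < √(R + s) := Real.sqrt_pos.2 (by linarith)
  refine (norm_amplitudeCoupling_le (one_le_norm_verticalLine hR s)).trans ?_
  have hρ : (0 : ℝ) < ‖fourthRoot (verticalLine R s)‖ := norm_pos_iff.2 (fourthRoot_ne_zero _)
  rw [← div_eq_mul_inv, div_div, div_le_div_iff₀ (by positivity) (by positivity)]
  nlinarith [mul_le_mul_of_nonneg_left (sqrt_pow_three_le (one_pos.trans_le hR) hs)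
    (by positivity : 0 ≤ ‖lam‖ + 2)]

theorem hasDerivAt_neg_div_sqrt {C : ℝ} (h : 0 < R + s) :
    HasDerivAt (fun s => -(C / √(R + s))) (C / (2 * √(R + s) ^ 3)) s := by
  have hpos : 0 < √(R + s) := Real.sqrt_pos.2 h
  refine ((((hasDerivAt_id s).const_add R).sqrt h.ne').inv hpos.ne' |>.const_mul (-C))
    |>.congr_deriv ?_ |>.congr_of_eventuallyEq (.of_forall fun x => ?_)
  · simp only [id]
    field_simp
  · simp [div_eq_mul_inv]

theorem norm_exp_mul_dominantAmplitude_le {z : ℂ} (hz : 1 ≤ ‖z‖) (f : ℂ → ℂ) :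
    ‖Complex.exp (2 * cubicAction z) * dominantAmplitude f z‖ ≤
      Real.exp (cubicAction z).re * (‖deriv f z‖ + 2 * ‖z‖ ^ 2 * ‖f z‖) := by
  have hfactor : Complex.exp (2 * cubicAction z) * dominantAmplitude f z =
      1 / 2 * (fourthRoot z ^ 3)⁻¹ * (Complex.exp (cubicAction z)
        * (deriv f z - wkbLogDeriv z * f z)) := by
    rw [dominantAmplitude, two_mul, Complex.exp_add, Complex.exp_neg]
    field_simp [Complex.exp_ne_zero]
  have hinv : (‖fourthRoot z‖ ^ 3)⁻¹ ≤ 1 :=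
    inv_le_one_of_one_le₀ (one_le_pow₀ (one_le_norm_fourthRoot hz))
  have hdefect : ‖deriv f z - wkbLogDeriv z * f z‖ ≤ ‖deriv f z‖ + 2 * ‖z‖ ^ 2 * ‖f z‖ := by
    refine (norm_sub_le _ _).trans ?_
    rw [norm_mul]
    gcongr
    exact norm_wkbLogDeriv_le hz
  rw [hfactor, norm_mul, norm_mul, norm_mul, norm_inv, norm_pow, Complex.norm_exp]
  calc _ ≤ 1 * (Real.exp (cubicAction z).re * (‖deriv f z‖ + 2 * ‖z‖ ^ 2 * ‖f z‖)) := by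
        gcongr
        rw [show ‖(1 / 2 : ℂ)‖ = 1 / 2 by norm_num]
        linarith
    _ = _ := one_mul _

variable (hf : SolvesSchrodinger (fun z => z ^ 3 + lam) f)
  (hi : IntegrableOn (fun s : ℝ => ‖f (Complex.I * s)‖ ^ 2) (Ioi 0))
include hf hi

theorem frequently_exp_mul_dominantAmplitude_lt (hR : 1 ≤ R) {δ : ℝ} (hδ : 0 < δ) :
    ∃ᶠ s in atTop, ‖Complex.exp (2 * cubicAction (verticalLine R s))
      * dominantAmplitude f (verticalLine R s)‖ < δ := by
  set M := Real.exp (cubicAction (verticalLine R 0)).re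
  have hM : 0 < M := Real.exp_pos _
  set m := δ / (5 * M)
  have hm : 0 < m := by positivity
  refine ((frequently_verticalLine_lt hf hi (zero_le_one.trans hR) (pow_pos hm 2)).and_eventually
    (eventually_ge_atTop R)).mono fun s ⟨hlt, hs⟩ => ?_
  have hf' : ‖deriv f (verticalLine R s)‖ < m :=
    lt_of_pow_lt_pow_left₀ 2 hm.le (hlt.trans_le' (le_add_of_nonneg_right (by positivity)))
  have hf₀ : s ^ 2 * ‖f (verticalLine R s)‖ < m := by
    refine lt_of_pow_lt_pow_left₀ 2 hm.le (hlt.trans_le' ?_)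
    rw [mul_pow]
    exact le_add_of_nonneg_left (sq_nonneg _)
  have hnorm : ‖verticalLine R s‖ ^ 2 ≤ 2 * s ^ 2 := by
    rw [sq_norm_verticalLine]
    linarith [pow_le_pow_left₀ (one_pos.trans_le hR).le hs 2]
  have hS : Real.exp (cubicAction (verticalLine R s)).re ≤ M :=
    Real.exp_le_exp.2 (antitoneOn_re_cubicAction (by linarith) self_mem_Ici
      (mem_Ici.2 (by linarith)) (by linarith))
  refine (norm_exp_mul_dominantAmplitude_le (one_le_norm_verticalLine hR s) f).trans_lt ?_
  calc _ ≤ M * (‖deriv f (verticalLine R s)‖ + 4 * (s ^ 2 * ‖f (verticalLine R s)‖)) := by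
        refine mul_le_mul hS ?_ (by positivity) hM.le
        linarith [mul_le_mul_of_nonneg_right hnorm (norm_nonneg (f (verticalLine R s)))]
    _ < M * (m + 4 * m) := by gcongr
    _ = δ := by simp only [m]; field_simp; norm_num

theorem isRecessivePair_verticalLine {ε : ℝ} (hR : 1 ≤ R) (hε : 8 * (‖lam‖ + 2) / √R ≤ ε)
    (hε8 : ε ≤ 1 / 8) :
    IsRecessivePair (fun s => Complex.exp (2 * cubicAction (verticalLine R s)))
      (fun s => Complex.I * amplitudeCoupling lam (verticalLine R s))
      (fun s => recessiveAmplitude f (verticalLine R s))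
      (fun s => dominantAmplitude f (verticalLine R s)) ε := by
  have hR₀ : 0 < R := one_pos.trans_le hR
  have hslit := verticalLine_mem_slitPlane hR₀
  have hH := fun s => hasDerivAt_comp_verticalLine (hf.hasDerivAt_recessiveAmplitude (hslit s))
  have hK := fun s => hasDerivAt_comp_verticalLine (hf.hasDerivAt_dominantAmplitude (hslit s))
  refine
    { continuousAt := fun s _ => (hH s).continuousAt
      ne_zero := fun s _ => Complex.exp_ne_zero _
      norm_anti := fun s t hs hst => ?_
      hasDerivAt_add := fun s _ => ((hH s).add (hK s)).congr_deriv (by ring)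
      hasDerivAt_mul := fun s _ => ?_
      exists_majorant := ⟨fun s => -(8 * (‖lam‖ + 2) / √(R + s)), _, fun s hs =>
        ⟨hasDerivAt_neg_div_sqrt (by linarith), ?_⟩, fun s t hs _ => ?_⟩
      nonneg := le_trans (by positivity) hε
      le_eighth := hε8
      frequently_lt := fun δ hδ => frequently_exp_mul_dominantAmplitude_lt hf hi hR hδ }
  · have hanti := antitoneOn_re_cubicAction hR₀ (mem_Ici.2 hs) (mem_Ici.2 (hs.trans hst)) hst
    simpa [Complex.norm_exp] using hanti
  · have hE := (hasDerivAt_comp_verticalLine (hasDerivAt_cubicAction (hslit s))).const_mul 2 |>.cexp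
    exact (hE.mul (hK s)).congr_deriv (by ring)
  · rw [norm_mul, Complex.norm_I, one_mul]
    exact norm_amplitudeCoupling_verticalLine_le hR hs
  · have hs' : 8 * (‖lam‖ + 2) / √(R + s) ≤ 8 * (‖lam‖ + 2) / √R := by
      gcongr
      linarith
    have ht : 0 ≤ 8 * (‖lam‖ + 2) / √(R + t) := by positivity
    linarith

end VerticalLine

section Rays

variable {lam mu : ℂ} {f g : ℂ → ℂ}

theorem eventually_amplitudes_le (hf : SolvesSchrodinger (fun z => z ^ 3 + lam) f)
    (hi : IntegrableOn (fun s : ℝ => ‖f (Complex.I * s)‖ ^ 2) (Ioi 0)) {ε : ℝ} (hε : 0 < ε)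
    (hε8 : ε ≤ 1 / 8) :
    ∀ᶠ R : ℝ in atTop, ∀ s, 0 ≤ s →
      ‖recessiveAmplitude f (verticalLine R s) - recessiveAmplitude f R‖ ≤
        24 * ε * ‖recessiveAmplitude f R‖ ∧
      ‖dominantAmplitude f (verticalLine R s)‖ ≤ 8 * ε * ‖recessiveAmplitude f R‖ := by
  have hlim : Tendsto (fun R => 8 * (‖lam‖ + 2) / √R) atTop (𝓝 0) :=
    tendsto_const_nhds.div_atTop Real.tendsto_sqrt_atTop
  filter_upwards [hlim.eventually (eventually_le_nhds hε), eventually_ge_atTop 1] with R hRε hR s hs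
  have hpair := isRecessivePair_verticalLine hf hi hR hRε hε8
  have hH := hpair.norm_recessive_sub_le hs
  have hK := hpair.norm_dominant_le_initial hs
  rw [verticalLine_zero] at hH hK
  exact ⟨hH, hK⟩

theorem eventually_norm_le_one_add_mul_norm (hf : SolvesSchrodinger (fun z => z ^ 3 + lam) f)
    (hi : IntegrableOn (fun s : ℝ => ‖f (Complex.I * s)‖ ^ 2) (Ioi 0))
    (hg : SolvesSchrodinger (fun z => z ^ 3 + mu) g)
    (hj : IntegrableOn (fun s : ℝ => ‖g (Complex.I * s)‖ ^ 2) (Ioi 0))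
    (hfg : ∀ x : ℝ, ‖f x‖ ≤ ‖g x‖) {δ : ℝ} (hδ : 0 < δ) :
    ∀ᶠ R : ℝ in atTop, ∀ s, 0 ≤ s → ‖f (verticalLine R s)‖ ≤ (1 + δ) * ‖g (verticalLine R s)‖ := by
  set ε := min (1 / 96) (δ / 192)
  have hε : 0 < ε := by positivity
  have hε₁ : ε ≤ 1 / 96 := min_le_left _ _
  have hε₂ : ε ≤ δ / 192 := min_le_right _ _
  filter_upwards [eventually_amplitudes_le hf hi hε (by linarith),
    eventually_amplitudes_le hg hj hε (by linarith)] with R hfR hgR s hs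
  have hfs := (hfR s hs).1
  have hgs := (hgR s hs).1
  have hreal : ‖recessiveAmplitude f R‖ ≤ ‖recessiveAmplitude g R‖ := by
    simp only [norm_recessiveAmplitude]
    gcongr
    exact hfg R
  have hle : ‖recessiveAmplitude f (verticalLine R s)‖ ≤
      (1 + δ) * ‖recessiveAmplitude g (verticalLine R s)‖ := by
    have hf_le := norm_le_norm_add_norm_sub' (recessiveAmplitude f (verticalLine R s))
      (recessiveAmplitude f R)
    have hg_ge := norm_le_norm_add_norm_sub (recessiveAmplitude g (verticalLine R s))
      (recessiveAmplitude g R)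
    calc _ ≤ (1 + 24 * ε) * ‖recessiveAmplitude f R‖ := by linarith
      _ ≤ (1 + 24 * ε) * ‖recessiveAmplitude g R‖ := by gcongr
      _ ≤ (1 + δ) * (1 - 24 * ε) * ‖recessiveAmplitude g R‖ := by gcongr; nlinarith
      _ ≤ (1 + δ) * ‖recessiveAmplitude g (verticalLine R s)‖ := by
          rw [mul_assoc]
          gcongr
          linarith
  have hpos : 0 < ‖fourthRoot (verticalLine R s)‖ ^ 3
      * Real.exp (-(cubicAction (verticalLine R s)).re) :=
    mul_pos (pow_pos (norm_pos_iff.2 (fourthRoot_ne_zero _)) 3) (Real.exp_pos _)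
  rw [norm_recessiveAmplitude, norm_recessiveAmplitude, ← mul_assoc (1 + δ)] at hle
  exact le_of_mul_le_mul_right hle hpos

theorem exists_norm_le_mul_exp (hf : SolvesSchrodinger (fun z => z ^ 3 + lam) f) :
    ∃ C, 0 ≤ C ∧ ∀ R : ℝ, 0 ≤ R → ‖f R‖ ≤ C * Real.exp (R * √(R ^ 3 + ‖lam‖ + 1)) := by
  refine ⟨√(‖deriv f 0‖ ^ 2 + ‖f 0‖ ^ 2), Real.sqrt_nonneg _, fun R hR => ?_⟩
  set M := √(R ^ 3 + ‖lam‖ + 1)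
  have hM : M ^ 2 = R ^ 3 + ‖lam‖ + 1 := Real.sq_sqrt (by positivity)
  have hM₁ : 1 ≤ M ^ 2 := by rw [hM, le_add_iff_nonneg_left]; positivity
  have henergy := hf.energy_segment_le 0 hR (Real.sqrt_nonneg _ : 0 ≤ M) fun x hx => by
    rw [hM, zero_add]
    refine (norm_add_le _ _).trans ?_
    rw [norm_pow, Complex.norm_of_nonneg hx.1]
    linarith [pow_le_pow_left₀ hx.1 hx.2 3]
  rw [zero_add] at henergy
  have hsq : ‖f R‖ ^ 2 ≤ (‖deriv f 0‖ ^ 2 + ‖f 0‖ ^ 2) * Real.exp (2 * M * R) := by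
    refine le_of_mul_le_mul_left ?_ (one_pos.trans_le hM₁)
    calc M ^ 2 * ‖f R‖ ^ 2 ≤ (‖deriv f 0‖ ^ 2 + M ^ 2 * ‖f 0‖ ^ 2) * Real.exp (2 * M * R) := by
          linarith [sq_nonneg ‖deriv f R‖]
      _ ≤ (M ^ 2 * ‖deriv f 0‖ ^ 2 + M ^ 2 * ‖f 0‖ ^ 2) * Real.exp (2 * M * R) := by
          gcongr
          exact le_mul_of_one_le_left (sq_nonneg _) hM₁
      _ = _ := by ring
  refine le_of_sq_le_sq ?_ (by positivity)
  rwa [mul_pow, Real.sq_sqrt (by positivity), ← Real.exp_nat_mul, Nat.cast_ofNat, mul_comm R,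
    ← mul_assoc]

end Rays

section SteepestDescent

/-- The direction in the first quadrant along which `cubicAction` is negative real: there
`cubicAction z = -(2 / 5) * ‖z‖ ^ (5 / 2)`. It is a fifth root of unity, and this is what makes the
potential `z ^ 3` real along it. -/
noncomputable def descentDirection : ℂ := Complex.exp ((2 * Real.pi / 5 : ℝ) * Complex.I)

theorem norm_descentDirection : ‖descentDirection‖ = 1 := Complex.norm_exp_ofReal_mul_I _

theorem descentDirection_pow_five : descentDirection ^ 5 = 1 := by
  rw [descentDirection, ← Complex.exp_nat_mul, ← Complex.exp_two_pi_mul_I]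
  congr 1
  push_cast
  ring

theorem descentDirection_re : descentDirection.re = Real.cos (2 * Real.pi / 5) :=
  Complex.exp_ofReal_mul_I_re _

theorem descentDirection_im : descentDirection.im = Real.sin (2 * Real.pi / 5) :=
  Complex.exp_ofReal_mul_I_im _

theorem descentDirection_re_pos : 0 < descentDirection.re := by
  rw [descentDirection_re]
  exact Real.cos_pos_of_mem_Ioo ⟨by linarith [Real.pi_pos], by linarith [Real.pi_pos]⟩

theorem descentDirection_re_le_half : descentDirection.re ≤ 1 / 2 := by
  rw [descentDirection_re, ← Real.cos_pi_div_three]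
  exact Real.cos_le_cos_of_nonneg_of_le_pi (by positivity) (by linarith [Real.pi_pos])
    (by linarith [Real.pi_pos])

theorem descentDirection_im_pos : 0 < descentDirection.im := by
  rw [descentDirection_im]
  exact Real.sin_pos_of_pos_of_lt_pi (by positivity) (by linarith [Real.pi_pos])

theorem re_cubicAction_descentDirection {t : ℝ} (ht : 0 < t) :
    (cubicAction (descentDirection * t)).re = -(2 / 5 * (t ^ 2 * √t)) := by
  rw [mul_comm, descentDirection, re_cubicAction_polar ht
    ⟨by linarith [Real.pi_pos], by linarith [Real.pi_pos]⟩,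
    show 5 / 2 * (2 * Real.pi / 5) = Real.pi by ring, Real.cos_pi]
  ring

theorem verticalLine_descentDirection (t : ℝ) :
    verticalLine (descentDirection.re * t) (descentDirection.im * t) = descentDirection * t := by
  rw [← verticalLine_re_im (descentDirection * t), Complex.re_mul_ofReal, Complex.im_mul_ofReal]

theorem norm_recessiveAmplitude_ofReal_le (f : ℂ → ℂ) {R : ℝ} (hR : 1 ≤ R) :
    ‖recessiveAmplitude f R‖ ≤ ‖f R‖ * R ^ 2 := by
  have hnorm : ‖(R : ℂ)‖ = R := Complex.norm_of_nonneg (by linarith)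
  have hS : 0 ≤ (cubicAction R).re := by
    have := re_cubicAction_polar (one_pos.trans_le hR) (θ := 0)
      ⟨by simp [Real.pi_pos], Real.pi_pos.le⟩
    simp only [Complex.ofReal_zero, zero_mul, Complex.exp_zero, mul_one] at this
    rw [this, mul_zero, Real.cos_zero, mul_one]
    positivity
  have hr : ‖fourthRoot R‖ ^ 3 ≤ R ^ 2 := by
    have := norm_fourthRoot_pow_six_le (hnorm.symm ▸ hR : 1 ≤ ‖(R : ℂ)‖)
    rw [hnorm] at this
    exact (pow_le_pow_right₀ (one_le_norm_fourthRoot (hnorm.symm ▸ hR)) (by norm_num)).trans this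
  rw [norm_recessiveAmplitude]
  gcongr
  refine (mul_le_of_le_one_right (by positivity) (Real.exp_le_one_iff.2 ?_)).trans hr
  linarith

theorem eventually_amplitudes_descentDirection_le {lam : ℂ} {f : ℂ → ℂ}
    (hf : SolvesSchrodinger (fun z => z ^ 3 + lam) f)
    (hi : IntegrableOn (fun s : ℝ => ‖f (Complex.I * s)‖ ^ 2) (Ioi 0)) :
    ∀ᶠ t : ℝ in atTop,
      ‖recessiveAmplitude f (descentDirection * t)‖ ≤
        4 * (‖f (descentDirection.re * t : ℝ)‖ * t ^ 2) ∧
      ‖dominantAmplitude f (descentDirection * t)‖ ≤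
        ‖f (descentDirection.re * t : ℝ)‖ * t ^ 2 := by
  have hev := (tendsto_id.const_mul_atTop descentDirection_re_pos).eventually
    ((eventually_amplitudes_le hf hi (by norm_num : (0 : ℝ) < 1 / 8) le_rfl).and
      (eventually_ge_atTop 1))
  simp only [id] at hev
  filter_upwards [hev, eventually_ge_atTop 0] with t ⟨hle, hR⟩ ht
  obtain ⟨hH, hK⟩ := hle _ (mul_nonneg descentDirection_im_pos.le ht)
  rw [verticalLine_descentDirection] at hH hK
  have hRt : descentDirection.re * t ≤ t := by nlinarith [descentDirection_re_le_half]
  have hreal : ‖recessiveAmplitude f (descentDirection.re * t : ℝ)‖ ≤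
      ‖f (descentDirection.re * t : ℝ)‖ * t ^ 2 :=
    (norm_recessiveAmplitude_ofReal_le f hR).trans (by gcongr)
  have htriangle := norm_le_norm_add_norm_sub' (recessiveAmplitude f (descentDirection * t))
    (recessiveAmplitude f (descentDirection.re * t : ℝ))
  exact ⟨by linarith, by linarith⟩

theorem eventually_norm_descentDirection_le_ofReal {lam : ℂ} {f : ℂ → ℂ}
    (hf : SolvesSchrodinger (fun z => z ^ 3 + lam) f)
    (hi : IntegrableOn (fun s : ℝ => ‖f (Complex.I * s)‖ ^ 2) (Ioi 0)) :
    ∀ᶠ t : ℝ in atTop,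
      ‖f (descentDirection * t)‖ ≤ 10 * ‖f (descentDirection.re * t : ℝ)‖ *
        (t ^ 4 * Real.exp (-(2 / 5 * (t ^ 2 * √t)))) ∧
      ‖deriv f (descentDirection * t)‖ ≤ 10 * ‖f (descentDirection.re * t : ℝ)‖ *
        (t ^ 4 * Real.exp (-(2 / 5 * (t ^ 2 * √t)))) := by
  filter_upwards [eventually_amplitudes_descentDirection_le hf hi, eventually_ge_atTop 1]
    with t ⟨hH, hK⟩ ht
  have hnorm : ‖descentDirection * t‖ = t := by
    rw [norm_mul, norm_descentDirection, one_mul, Complex.norm_of_nonneg (by linarith)]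
  have hf_le := norm_le_recessiveAmplitude_mul_exp (f := f) (hnorm.symm ▸ ht)
  have hf'_le := norm_deriv_le_amplitudes_mul_exp (f := f) (hnorm.symm ▸ ht)
  rw [re_cubicAction_descentDirection (by linarith)] at hf_le hf'_le
  rw [hnorm] at hf'_le
  generalize ‖f (descentDirection.re * t : ℝ)‖ = m at hH hK ⊢
  have hm : 0 ≤ m * t ^ 2 := (norm_nonneg _).trans hK
  constructor
  · calc _ ≤ 4 * (m * t ^ 2) * Real.exp (-(2 / 5 * (t ^ 2 * √t))) :=
          hf_le.trans (by gcongr)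
      _ ≤ 10 * (m * t ^ 2) * t ^ 2 * Real.exp (-(2 / 5 * (t ^ 2 * √t))) := by
          gcongr ?_ * _
          nlinarith [one_le_pow₀ ht (n := 2)]
      _ = _ := by ring
  · calc _ ≤ 2 * t ^ 2 * (5 * (m * t ^ 2)) * Real.exp (-(2 / 5 * (t ^ 2 * √t))) :=
          hf'_le.trans (by gcongr; linarith)
      _ = _ := by ring

theorem eventually_exponent_le (lam : ℂ) : ∀ᶠ t : ℝ in atTop,
    descentDirection.re * t * √((descentDirection.re * t) ^ 3 + ‖lam‖ + 1) ≤
      1 / 4 * (t ^ 2 * √t) := by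
  filter_upwards [eventually_ge_atTop 1,
    (tendsto_pow_atTop three_ne_zero).eventually_ge_atTop (8 * (‖lam‖ + 1))] with t ht ht₃
  have hω := descentDirection_re_pos
  have hR : descentDirection.re * t ≤ 1 / 2 * t := by gcongr; exact descentDirection_re_le_half
  have hsqrt : √((descentDirection.re * t) ^ 3 + ‖lam‖ + 1) ≤ 1 / 2 * (t * √t) := by
    refine Real.sqrt_le_iff.2 ⟨by positivity, ?_⟩
    have hcube : (descentDirection.re * t) ^ 3 ≤ (1 / 2 * t) ^ 3 := by gcongr
    have hsq : (1 / 2 * (t * √t)) ^ 2 = 1 / 4 * t ^ 3 := by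
      rw [mul_pow, mul_pow, Real.sq_sqrt (by positivity)]
      ring
    linarith
  calc _ ≤ 1 / 2 * t * (1 / 2 * (t * √t)) := by gcongr
    _ = _ := by ring

theorem pow_four_mul_exp_le {t : ℝ} (ht : 9 ≤ t) :
    t ^ 4 * Real.exp (-(3 / 20 * (t ^ 2 * √t))) ≤ 24 * Real.exp (-t) := by
  have ht₀ : 0 ≤ t := by linarith
  have hpow : t ^ 4 ≤ 24 * Real.exp t := by
    have := Real.pow_div_factorial_le_exp t ht₀ 4
    norm_num [Nat.factorial] at this
    linarith
  have hsqrt : 3 ≤ √t := Real.le_sqrt_of_sq_le (by linarith)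
  have hlarge : 2 * t ≤ 3 / 20 * (t ^ 2 * √t) := by
    calc 2 * t ≤ 3 / 20 * (t ^ 2 * 3) := by nlinarith
      _ ≤ _ := by gcongr
  calc _ ≤ 24 * Real.exp t * Real.exp (-(2 * t)) := by gcongr
    _ = 24 * Real.exp (-t) := by rw [mul_assoc, ← Real.exp_add]; congr 2; ring

theorem isBigO_descentDirection {lam : ℂ} {f : ℂ → ℂ}
    (hf : SolvesSchrodinger (fun z => z ^ 3 + lam) f)
    (hi : IntegrableOn (fun s : ℝ => ‖f (Complex.I * s)‖ ^ 2) (Ioi 0)) :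
    (fun t : ℝ => f (descentDirection * t)) =O[atTop] (fun t => Real.exp (-t)) ∧
      (fun t : ℝ => deriv f (descentDirection * t)) =O[atTop] fun t => Real.exp (-t) := by
  obtain ⟨C, hC, hgrowth⟩ := exists_norm_le_mul_exp hf
  have hev : ∀ᶠ t : ℝ in atTop, 10 * ‖f (descentDirection.re * t : ℝ)‖ *
      (t ^ 4 * Real.exp (-(2 / 5 * (t ^ 2 * √t)))) ≤ 240 * C * ‖Real.exp (-t)‖ := by
    filter_upwards [eventually_exponent_le lam, eventually_ge_atTop 9] with t hexp ht
    rw [Real.norm_of_nonneg (Real.exp_pos _).le]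
    have hf_le := (hgrowth _ (mul_nonneg descentDirection_re_pos.le (by linarith))).trans
      (mul_le_mul_of_nonneg_left (Real.exp_le_exp.2 hexp) hC)
    calc _ ≤ 10 * (C * Real.exp (1 / 4 * (t ^ 2 * √t))) *
          (t ^ 4 * Real.exp (-(2 / 5 * (t ^ 2 * √t)))) := by gcongr
      _ = 10 * C * (t ^ 4 * Real.exp (-(3 / 20 * (t ^ 2 * √t)))) := by
          rw [show -(3 / 20 * (t ^ 2 * √t)) = 1 / 4 * (t ^ 2 * √t) + -(2 / 5 * (t ^ 2 * √t)) by
            ring, Real.exp_add]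
          ring
      _ ≤ 10 * C * (24 * Real.exp (-t)) :=
          mul_le_mul_of_nonneg_left (pow_four_mul_exp_le ht) (by positivity)
      _ = 240 * C * Real.exp (-t) := by ring
  have hle := eventually_norm_descentDirection_le_ofReal hf hi
  exact ⟨.of_bound (240 * C) (hle.and hev |>.mono fun t ht => ht.1.1.trans ht.2),
    .of_bound (240 * C) (hle.and hev |>.mono fun t ht => ht.1.2.trans ht.2)⟩

theorem eventually_norm_descentDirection_le {lam mu : ℂ} {f g : ℂ → ℂ}
    (hf : SolvesSchrodinger (fun z => z ^ 3 + lam) f)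
    (hi : IntegrableOn (fun s : ℝ => ‖f (Complex.I * s)‖ ^ 2) (Ioi 0))
    (hg : SolvesSchrodinger (fun z => z ^ 3 + mu) g)
    (hj : IntegrableOn (fun s : ℝ => ‖g (Complex.I * s)‖ ^ 2) (Ioi 0))
    (hfg : ∀ x : ℝ, ‖f x‖ ≤ ‖g x‖) {δ : ℝ} (hδ : 0 < δ) :
    ∀ᶠ t : ℝ in atTop, ‖f (descentDirection * t)‖ ≤ (1 + δ) * ‖g (descentDirection * t)‖ := by
  filter_upwards [(tendsto_id.const_mul_atTop descentDirection_re_pos).eventually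
    (eventually_norm_le_one_add_mul_norm hf hi hg hj hfg hδ), eventually_ge_atTop 0] with t hle ht
  simpa only [id, verticalLine_descentDirection] using
    hle _ (mul_nonneg descentDirection_im_pos.le ht)

end SteepestDescent

section HalfLineIntegrals

theorem integral_Ioi_of_hasDerivAt_of_integrableOn {E : Type*} [NormedAddCommGroup E]
    [NormedSpace ℝ E] [CompleteSpace E] {W W' : ℝ → E} {x : ℝ}
    (hW : ∀ t ∈ Ici x, HasDerivAt W (W' t) t) (hi : IntegrableOn W (Ioi x))
    (hi' : IntegrableOn W' (Ioi x)) : ∫ t in Ioi x, W' t = -W x := by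
  rw [integral_Ioi_of_hasDerivAt_of_tendsto' hW hi'
    (tendsto_zero_of_hasDerivAt_of_integrableOn_Ioi (fun t ht => hW t (Ioi_subset_Ici_self ht))
      hi' hi), zero_sub]

theorem hasDerivAt_integral_Ioi {h : ℝ → ℝ} (hc : Continuous h) (hi : ∀ x, IntegrableOn h (Ioi x))
    (x : ℝ) : HasDerivAt (fun x => ∫ t in Ioi x, h t) (-h x) x := by
  have hsplit : (fun x => ∫ t in Ioi x, h t) =
      fun x => (∫ t in Ioi 0, h t) - ∫ t in (0 : ℝ)..x, h t :=
    funext fun x => eq_sub_of_add_eq' (intervalIntegral.integral_interval_add_Ioi (hi 0) (hi x))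
  rw [hsplit]
  exact (hc.integral_hasStrictDerivAt 0 x).hasDerivAt.const_sub _

theorem integral_Ioi_pos {h : ℝ → ℝ} {x y : ℝ} (hc : Continuous h) (h₀ : ∀ t, x ≤ t → 0 ≤ h t)
    (hi : IntegrableOn h (Ioi x)) (hxy : x ≤ y) (hy : h y ≠ 0) : 0 < ∫ t in Ioi x, h t := by
  have hae : 0 ≤ᵐ[volume.restrict (Ioi x)] h :=
    (ae_restrict_iff' measurableSet_Ioi).2 (.of_forall fun t ht => h₀ t (le_of_lt ht))
  refine lt_of_le_of_ne (integral_nonneg_of_ae hae) fun hzero => hy ?_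
  have heq := Measure.eqOn_open_of_ae_eq
    ((setIntegral_eq_zero_iff_of_nonneg_ae hae hi).1 hzero.symm) isOpen_Ioi hc.continuousOn
    continuousOn_const
  exact heq.closure hc continuous_const (closure_Ioi x ▸ hxy)

theorem sq_norm_integral_mul_le {α : Type*} {_ : MeasurableSpace α} {μ : Measure α} {f g : α → ℂ}
    (hf : MemLp f 2 μ) (hg : MemLp g 2 μ) :
    ‖∫ a, f a * g a ∂μ‖ ^ 2 ≤ (∫ a, ‖f a‖ ^ 2 ∂μ) * ∫ a, ‖g a‖ ^ 2 ∂μ := by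
  have hholder := integral_mul_norm_le_Lp_mul_Lq (p := 2) (q := 2) .two_two (by simpa using hf)
    (by simpa using hg)
  have hle := (norm_integral_le_integral_norm _).trans
    ((integral_congr_ae (.of_forall fun a => norm_mul (f a) (g a))).trans_le hholder)
  simp only [Real.rpow_two, ← Real.sqrt_eq_rpow] at hle
  refine (pow_le_pow_left₀ (norm_nonneg _) hle 2).trans_eq ?_
  rw [mul_pow, Real.sq_sqrt (integral_nonneg fun _ => sq_nonneg _),
    Real.sq_sqrt (integral_nonneg fun _ => sq_nonneg _)]

end HalfLineIntegrals

/-- `y` lies near `+∞` in the form domain of the operator `-d²/dt² + q`: `y`, `y'` and `√|q| y` are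
square-integrable on every half-line `(x, ∞)`. -/
structure HasFiniteEnergy (q : ℝ → ℝ) (y : ℝ → ℂ) : Prop where
  memLp : ∀ x, MemLp y 2 (volume.restrict (Ioi x))
  memLp_deriv : ∀ x, MemLp (deriv y) 2 (volume.restrict (Ioi x))
  integrableOn_potential : ∀ x, IntegrableOn (fun t => q t * ‖y t‖ ^ 2) (Ioi x)

theorem integrableOn_Ioi_of_isBigO_exp_neg {h : ℝ → ℝ} (hc : Continuous h)
    (ho : h =O[atTop] fun t => Real.exp (-t)) (x : ℝ) : IntegrableOn h (Ioi x) :=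
  integrable_of_isBigO_exp_neg one_pos hc.continuousOn (by simpa only [neg_one_mul] using ho)

theorem memLp_two_Ioi_of_isBigO_exp_neg {y : ℝ → ℂ} (hc : Continuous y)
    (hy : y =O[atTop] fun t => Real.exp (-t)) (x : ℝ) : MemLp y 2 (volume.restrict (Ioi x)) := by
  rw [memLp_two_iff_integrable_sq_norm hc.aestronglyMeasurable]
  refine integrableOn_Ioi_of_isBigO_exp_neg (by fun_prop) ((hy.norm_left.pow 2).trans ?_) x
  refine .of_bound 1 ?_
  filter_upwards [eventually_ge_atTop 0] with t ht
  rw [one_mul, norm_pow]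
  exact pow_le_of_le_one (norm_nonneg _)
    (by rw [Real.norm_of_nonneg (Real.exp_pos _).le]; exact Real.exp_le_one_iff.2 (by linarith))
    two_ne_zero

namespace HasFiniteEnergy

variable {q : ℝ → ℝ} {y : ℝ → ℂ}

theorem of_isBigO_exp_neg (hq : Continuous q) (hqo : q =O[atTop] Real.exp) (hy : Continuous y)
    (hy' : Continuous (deriv y)) (ho : y =O[atTop] fun t => Real.exp (-t))
    (ho' : deriv y =O[atTop] fun t => Real.exp (-t)) : HasFiniteEnergy q y where
  memLp := memLp_two_Ioi_of_isBigO_exp_neg hy ho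
  memLp_deriv := memLp_two_Ioi_of_isBigO_exp_neg hy' ho'
  integrableOn_potential := by
    refine integrableOn_Ioi_of_isBigO_exp_neg (by fun_prop)
      ((hqo.mul (ho.norm_left.pow 2)).congr_right fun t => ?_)
    rw [← Real.exp_nat_mul, ← Real.exp_add]
    congr 1
    push_cast
    ring

theorem const_mul (h : HasFiniteEnergy q y) (c : ℂ) : HasFiniteEnergy q fun t => c * y t where
  memLp x := (h.memLp x).const_mul c
  memLp_deriv x := by
    rw [deriv_const_mul_field']
    exact (h.memLp_deriv x).const_mul c
  integrableOn_potential x := by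
    refine ((h.integrableOn_potential x).const_mul (‖c‖ ^ 2)).congr (.of_forall fun t => ?_)
    simp only [norm_mul, mul_pow]
    ring

theorem integrableOn_sq_norm (h : HasFiniteEnergy q y) (x : ℝ) :
    IntegrableOn (fun t => ‖y t‖ ^ 2) (Ioi x) :=
  (h.memLp x).integrable_norm_pow two_ne_zero

theorem integrableOn_potential_im (h : HasFiniteEnergy q y) (hq : Continuous q)
    (hy : Continuous y) (x : ℝ) : IntegrableOn (fun t => q t * (y t).im ^ 2) (Ioi x) := by
  refine Integrable.mono (h.integrableOn_potential x) (by fun_prop) (.of_forall fun t => ?_)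
  rw [norm_mul, norm_mul, norm_pow, norm_pow, norm_norm]
  gcongr
  exact Complex.abs_im_le_norm _

theorem memLp_im_mul_sub (h : HasFiniteEnergy q y) (mu nu : ℂ) (x : ℝ) :
    MemLp (fun t => ((nu * y t).im - mu * (y t).im : ℂ)) 2 (volume.restrict (Ioi x)) :=
  ((h.memLp x).const_mul nu).im.ofReal.sub ((h.memLp x).im.ofReal.const_mul mu)

end HasFiniteEnergy

theorem sq_norm_im_mul_sub {mu nu : ℂ} (h : ‖mu‖ = ‖nu‖) (w : ℂ) :
    ‖((nu * w).im - mu * w.im : ℂ)‖ ^ 2 =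
      nu.im ^ 2 * ‖w‖ ^ 2 + 2 * (nu.re - mu.re) * ((nu * w).im * w.im) := by
  have hsq := congrArg (· ^ 2) h
  simp only [Complex.sq_norm, Complex.normSq_apply] at hsq ⊢
  simp only [Complex.sub_re, Complex.sub_im, Complex.mul_re, Complex.mul_im, Complex.ofReal_re,
    Complex.ofReal_im]
  linear_combination w.im ^ 2 * hsq

namespace SolvesSchrodinger

section GreenIdentities

variable {q : ℝ → ℝ} {mu nu : ℂ} {F U : ℝ → ℂ} {x : ℝ}

theorem hasDerivAt_im (hU : SolvesSchrodinger (fun t => q t + nu) U) (t : ℝ) :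
    HasDerivAt (fun t => (U t).im) (deriv U t).im t :=
  Complex.imCLM.hasFDerivAt.comp_hasDerivAt t (hU.hasDerivAt t)

theorem hasDerivAt_im_deriv (hU : SolvesSchrodinger (fun t => q t + nu) U) (t : ℝ) :
    HasDerivAt (fun t => (deriv U t).im) (q t * (U t).im + (nu * U t).im) t := by
  refine (Complex.imCLM.hasFDerivAt.comp_hasDerivAt t (hU.hasDerivAt_deriv t)).congr_deriv ?_
  rw [Complex.imCLM_apply, add_mul, Complex.add_im, Complex.im_ofReal_mul]

theorem im_conj_mul_deriv (hU : SolvesSchrodinger (fun t => q t + nu) U)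
    (hUe : HasFiniteEnergy q U) (x : ℝ) :
    (conj (U x) * deriv U x).im = -(nu.im * ∫ t in Ioi x, ‖U t‖ ^ 2) := by
  have hflux : ∀ t, HasDerivAt (schrodingerFlux (-Complex.I) U) (nu.im * ‖U t‖ ^ 2) t := fun t =>
    (hU.hasDerivAt_flux (-Complex.I) t).congr_deriv (by simp)
  have hflux_int : IntegrableOn (schrodingerFlux (-Complex.I) U) (Ioi x) := by
    refine Integrable.mono' ((hUe.memLp_deriv x).norm.integrable_mul (hUe.memLp x).norm)
      (continuous_iff_continuousAt.2 fun t => (hflux t).continuousAt).aestronglyMeasurable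
      (.of_forall fun t => (abs_flux_le _ _ _).trans (by simp))
  have hgreen := integral_Ioi_of_hasDerivAt_of_integrableOn (fun t _ => hflux t) hflux_int
    ((hUe.integrableOn_sq_norm x).const_mul _)
  rw [integral_const_mul] at hgreen
  rw [hgreen, neg_neg, schrodingerFlux, Complex.inner]
  simp [mul_comm]

theorem integral_im_energy (hq : Continuous q) (hU : SolvesSchrodinger (fun t => q t + nu) U)
    (hUe : HasFiniteEnergy q U) (hx : (U x).im = 0) :
    ∫ t in Ioi x, (nu * U t).im * (U t).im =
      -∫ t in Ioi x, ((deriv U t).im ^ 2 + q t * (U t).im ^ 2) := by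
  have henergy : IntegrableOn (fun t => (deriv U t).im ^ 2 + q t * (U t).im ^ 2) (Ioi x) :=
    (hUe.memLp_deriv x).im.integrable_sq.add (hUe.integrableOn_potential_im hq hU.continuous x)
  have hsource : IntegrableOn (fun t => (nu * U t).im * (U t).im) (Ioi x) :=
    ((hUe.memLp x).const_mul nu).im.integrable_mul (hUe.memLp x).im
  have hderiv : ∀ t, HasDerivAt (fun t => (U t).im * (deriv U t).im)
      ((deriv U t).im ^ 2 + q t * (U t).im ^ 2 + (nu * U t).im * (U t).im) t := fun t =>
    ((hU.hasDerivAt_im t).mul (hU.hasDerivAt_im_deriv t)).congr_deriv (by ring)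
  have hgreen := integral_Ioi_of_hasDerivAt_of_integrableOn (fun t _ => hderiv t)
    ((hUe.memLp x).im.integrable_mul (hUe.memLp_deriv x).im) (henergy.add hsource)
  rw [integral_add henergy hsource, hx, zero_mul, neg_zero] at hgreen
  linarith

theorem integral_mul_im_source (hF : SolvesSchrodinger (fun t => q t + mu) F)
    (hU : SolvesSchrodinger (fun t => q t + nu) U) (hFe : HasFiniteEnergy q F)
    (hUe : HasFiniteEnergy q U) (hx : (U x).im = 0) :
    ∫ t in Ioi x, F t * ((nu * U t).im - mu * (U t).im) = -(F x * (deriv U x).im) := by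
  have hderiv : ∀ t, HasDerivAt (fun t => F t * (deriv U t).im - deriv F t * (U t).im)
      (F t * ((nu * U t).im - mu * (U t).im)) t := fun t => by
    refine (((hF.hasDerivAt t).mul (hU.hasDerivAt_im_deriv t).ofReal_comp).sub
      ((hF.hasDerivAt_deriv t).mul (hU.hasDerivAt_im t).ofReal_comp)).congr_deriv ?_
    push_cast
    ring
  rw [integral_Ioi_of_hasDerivAt_of_integrableOn (fun t _ => hderiv t) _ _]
  · simp [hx]
  · exact ((hFe.memLp x).integrable_mul (hUe.memLp_deriv x).im.ofReal).sub
      ((hFe.memLp_deriv x).integrable_mul (hUe.memLp x).im.ofReal)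
  · exact (hFe.memLp x).integrable_mul (hUe.memLp_im_mul_sub mu nu x)

end GreenIdentities

section Comparison

variable {q : ℝ → ℝ} {mu nu : ℂ} {F G U : ℝ → ℂ} {x : ℝ}

theorem integral_Ioi_sq_norm_pos (hq : Continuous q)
    (hG : SolvesSchrodinger (fun t => q t + nu) G) (hGe : HasFiniteEnergy q G) (hne : G ≠ 0)
    (x : ℝ) : 0 < ∫ t in Ioi x, ‖G t‖ ^ 2 := by
  have hGc := hG.continuous
  obtain ⟨y, hxy, hy⟩ : ∃ y, x ≤ y ∧ G y ≠ 0 := by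
    by_contra! hzero
    have hloc : G =ᶠ[𝓝 (x + 1)] 0 :=
      (lt_mem_nhds (lt_add_one x)).mono fun y hy => hzero y hy.le
    exact hne (hG.eq_zero (by fun_prop) hloc.self_of_nhds (by simpa using! hloc.deriv_eq))
  exact integral_Ioi_pos (by fun_prop) (fun t _ => sq_nonneg _) (hGe.integrableOn_sq_norm x) hxy
    (pow_ne_zero 2 (norm_ne_zero_iff.2 hy))

theorem sq_norm_mul_sq_im_deriv_le (hq : Continuous q)
    (hF : SolvesSchrodinger (fun t => q t + mu) F) (hU : SolvesSchrodinger (fun t => q t + nu) U)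
    (hFe : HasFiniteEnergy q F) (hUe : HasFiniteEnergy q U) (hmn : ‖mu‖ = ‖nu‖)
    (hx : (U x).im = 0) :
    ‖F x‖ ^ 2 * (deriv U x).im ^ 2 ≤ (∫ t in Ioi x, ‖F t‖ ^ 2) *
      (nu.im ^ 2 * (∫ t in Ioi x, ‖U t‖ ^ 2) -
        2 * (nu.re - mu.re) * ∫ t in Ioi x, ((deriv U t).im ^ 2 + q t * (U t).im ^ 2)) := by
  have hcs := sq_norm_integral_mul_le (hFe.memLp x) (hUe.memLp_im_mul_sub mu nu x)
  simp only [sq_norm_im_mul_sub hmn] at hcs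
  have hsource : IntegrableOn (fun t => (nu * U t).im * (U t).im) (Ioi x) :=
    ((hUe.memLp x).const_mul nu).im.integrable_mul (hUe.memLp x).im
  rwa [hF.integral_mul_im_source hU hFe hUe hx,
    integral_add ((hUe.integrableOn_sq_norm x).const_mul _) (hsource.const_mul _),
    integral_const_mul, integral_const_mul, hU.integral_im_energy hq hUe hx, norm_neg, norm_mul,
    mul_pow, Complex.norm_real, Real.norm_eq_abs, sq_abs, mul_neg, ← sub_eq_add_neg] at hcs

variable (hq : Continuous q) (hq₀ : ∀ t, 0 ≤ t → 0 ≤ q t)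
  (hF : SolvesSchrodinger (fun t => q t + mu) F) (hG : SolvesSchrodinger (fun t => q t + nu) G)
  (hFe : HasFiniteEnergy q F) (hGe : HasFiniteEnergy q G) (hF₀ : F ≠ 0) (hG₀ : G ≠ 0)
  (hmn : ‖mu‖ = ‖nu‖) (hre : mu.re < nu.re) (him : nu.im ≠ 0)
include hq hq₀ hF hG hFe hGe hF₀ hG₀ hmn hre him

-- Rotating `G` to `U = conj (G x) * G` makes `U x` real, so that no boundary term with `deriv F x`
-- survives when Green's identity is applied to `F` and `U.im`.
theorem sq_norm_mul_integral_lt (hx : 0 ≤ x) :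
    ‖F x‖ ^ 2 * (∫ t in Ioi x, ‖G t‖ ^ 2) < (∫ t in Ioi x, ‖F t‖ ^ 2) * ‖G x‖ ^ 2 := by
  have hU := hG.const_mul (conj (G x))
  have hUe := hGe.const_mul (conj (G x))
  have hderiv : deriv (fun t => conj (G x) * G t) = fun t => conj (G x) * deriv G t :=
    deriv_const_mul_field' _
  have hle := hF.sq_norm_mul_sq_im_deriv_le hq hU hFe hUe hmn (x := x) (by
    rw [mul_comm, Complex.mul_conj, Complex.ofReal_im])
  have hJF := hF.integral_Ioi_sq_norm_pos hq hFe hF₀ x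
  have hJG := hG.integral_Ioi_sq_norm_pos hq hGe hG₀ x
  have hderiv_ne : (deriv (fun t => conj (G x) * G t) x).im ≠ 0 := by
    rw [hderiv, hG.im_conj_mul_deriv hGe, neg_ne_zero]
    exact mul_ne_zero him hJG.ne'
  have hGc := hG.continuous
  have hGc' := hG.continuous_deriv
  have henergy : 0 < ∫ t in Ioi x, ((deriv (fun t => conj (G x) * G t) t).im ^ 2 +
      q t * (conj (G x) * G t).im ^ 2) := by
    refine integral_Ioi_pos (by rw [hderiv]; fun_prop) (fun t ht => ?_)
      ((hUe.memLp_deriv x).im.integrable_sq.add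
        (hUe.integrableOn_potential_im hq hU.continuous x)) le_rfl (ne_of_gt ?_)
    · have := hq₀ t (hx.trans ht)
      positivity
    · have := hq₀ x hx
      positivity
  have hJU : ∫ t in Ioi x, ‖conj (G x) * G t‖ ^ 2 = ‖G x‖ ^ 2 * ∫ t in Ioi x, ‖G t‖ ^ 2 := by
    simp only [norm_mul, mul_pow, RCLike.norm_conj, integral_const_mul]
  rw [hJU] at hle
  rw [hderiv, hG.im_conj_mul_deriv hGe] at hle
  rw [hderiv] at henergy
  have him2 : 0 < nu.im ^ 2 := by positivity
  refine lt_of_mul_lt_mul_right ?_ (mul_pos him2 hJG).le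
  have := mul_pos hJF (mul_pos (sub_pos.2 hre) henergy)
  linarith

theorem monotoneOn_integral_div_integral :
    MonotoneOn (fun x => (∫ t in Ioi x, ‖F t‖ ^ 2) / ∫ t in Ioi x, ‖G t‖ ^ 2) (Ici 0) := by
  have hFc := hF.continuous
  have hGc := hG.continuous
  have hJG := hG.integral_Ioi_sq_norm_pos hq hGe hG₀
  refine monotoneOn_of_hasDerivAt_nonneg (convex_Ici 0) (fun x _ =>
    (hasDerivAt_integral_Ioi (by fun_prop) hFe.integrableOn_sq_norm x).div
      (hasDerivAt_integral_Ioi (by fun_prop) hGe.integrableOn_sq_norm x) (hJG x).ne')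
    fun x hx => div_nonneg ?_ (sq_nonneg _)
  linarith [hF.sq_norm_mul_integral_lt hq hq₀ hG hFe hGe hF₀ hG₀ hmn hre him hx]

theorem norm_lt_of_eventually_norm_le
    (hFG : ∀ δ : ℝ, 0 < δ → ∀ᶠ t in atTop, ‖F t‖ ≤ (1 + δ) * ‖G t‖) : ‖F 0‖ < ‖G 0‖ := by
  have hmono := hF.monotoneOn_integral_div_integral hq hq₀ hG hFe hGe hF₀ hG₀ hmn hre him
  have hJF := hF.integral_Ioi_sq_norm_pos hq hFe hF₀ 0
  have hJG := hG.integral_Ioi_sq_norm_pos hq hGe hG₀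
  have hratio : ∀ δ : ℝ, 0 < δ →
      (∫ t in Ioi 0, ‖F t‖ ^ 2) / (∫ t in Ioi 0, ‖G t‖ ^ 2) ≤ (1 + δ) ^ 2 := fun δ hδ => by
    obtain ⟨T, hT⟩ := eventually_atTop.1 (hFG δ hδ)
    refine (hmono self_mem_Ici (le_max_right T 0) (le_max_right T 0)).trans ?_
    rw [div_le_iff₀ (hJG _), ← integral_const_mul]
    refine setIntegral_mono_on (hFe.integrableOn_sq_norm _)
      ((hGe.integrableOn_sq_norm _).const_mul _) measurableSet_Ioi fun t ht => ?_
    rw [← mul_pow]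
    exact pow_le_pow_left₀ (norm_nonneg _) (hT t ((le_max_left T 0).trans (le_of_lt ht))) 2
  have hlim : Tendsto (fun δ : ℝ => (1 + δ) ^ 2) (𝓝[>] 0) (𝓝 1) :=
    ((by fun_prop : Continuous fun δ : ℝ => (1 + δ) ^ 2).tendsto' 0 1 (by norm_num)).mono_left
      nhdsWithin_le_nhds
  have hle : (∫ t in Ioi 0, ‖F t‖ ^ 2) ≤ ∫ t in Ioi 0, ‖G t‖ ^ 2 := by
    rw [← div_le_one (hJG 0)]
    exact ge_of_tendsto hlim (eventually_nhdsWithin_of_forall hratio)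
  have hlt := hF.sq_norm_mul_integral_lt hq hq₀ hG hFe hGe hF₀ hG₀ hmn hre him le_rfl
  refine lt_of_pow_lt_pow_left₀ 2 (norm_nonneg _) (lt_of_mul_lt_mul_right ?_ hJF.le)
  nlinarith [mul_le_mul_of_nonneg_left hle (sq_nonneg ‖F 0‖)]

end Comparison

end SolvesSchrodinger

section Eigenvalues

theorem descentDirection_sq :
    descentDirection ^ 2 = Complex.exp ((4 * Real.pi / 5 : ℝ) * Complex.I) := by
  rw [descentDirection, ← Complex.exp_nat_mul]
  congr 1
  push_cast
  ring

theorem descentDirection_sq_re_neg : (descentDirection ^ 2).re < 0 := by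
  rw [descentDirection_sq, Complex.exp_ofReal_mul_I_re]
  exact Real.cos_neg_of_pi_div_two_lt_of_lt (by linarith [Real.pi_pos]) (by linarith [Real.pi_pos])

theorem descentDirection_sq_im_pos : 0 < (descentDirection ^ 2).im := by
  rw [descentDirection_sq, Complex.exp_ofReal_mul_I_im]
  exact Real.sin_pos_of_pos_of_lt_pi (by positivity) (by linarith [Real.pi_pos])

theorem SolvesSchrodinger.comp_mul_ofReal_ne_zero {V f : ℂ → ℂ} (hf : SolvesSchrodinger V f)
    (hV : Continuous V) (hne : f ≠ 0) {d : ℂ} (hd : d ≠ 0) : (fun t : ℝ => f (d * t)) ≠ 0 := by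
  intro hzero
  have h₁ : d * deriv f 0 = 0 := by
    simpa [hzero] using (congrFun (hf.deriv_comp_line 0 d) 0).symm
  refine hne (funext fun z => ?_)
  have hline := (hf.comp_line 0 z).eq_zero (a := 0) (by fun_prop)
    (by simpa using congrFun hzero 0)
    (by rw [hf.deriv_comp_line]; simp [(mul_eq_zero.1 h₁).resolve_left hd])
  simpa using congrFun hline 1

theorem SolvesSchrodinger.comp_descentDirection {lam : ℂ} {f : ℂ → ℂ}
    (hf : SolvesSchrodinger (fun z => z ^ 3 + lam) f) :
    SolvesSchrodinger (fun t : ℝ => ((t ^ 3 : ℝ) : ℂ) + descentDirection ^ 2 * lam)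
      (fun t : ℝ => f (descentDirection * t)) := by
  convert! hf.comp_line 0 descentDirection using 2 with t
  · push_cast
    linear_combination (-(t : ℂ) ^ 3) * descentDirection_pow_five
  · rw [zero_add]

theorem HasFiniteEnergy.comp_descentDirection {lam : ℂ} {f : ℂ → ℂ}
    (hf : SolvesSchrodinger (fun z => z ^ 3 + lam) f)
    (hi : IntegrableOn (fun s : ℝ => ‖f (Complex.I * s)‖ ^ 2) (Ioi 0)) :
    HasFiniteEnergy (· ^ 3) (fun t : ℝ => f (descentDirection * t)) := by
  have hderiv : deriv (fun t : ℝ => f (descentDirection * t)) =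
      fun t : ℝ => descentDirection * deriv f (descentDirection * t) := by
    simpa only [zero_add] using hf.deriv_comp_line 0 descentDirection
  obtain ⟨ho, ho'⟩ := isBigO_descentDirection hf hi
  have hF := hf.comp_descentDirection
  exact .of_isBigO_exp_neg (by fun_prop) Real.isLittleO_pow_exp_atTop.isBigO hF.continuous
    hF.continuous_deriv ho (hderiv ▸ ho'.const_mul_left _)

/-- The continuation of an eigenfunction `ψ` to the complex plane, rotated so that `ψ s = f (I s)`.
In this variable the oscillator equation `-ψ'' + i x³ ψ = lam ψ` is `f'' = (z³ + lam) f`. -/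
structure IsEntireEigenfunction (lam : ℂ) (f : ℂ → ℂ) : Prop where
  solves : SolvesSchrodinger (fun z => z ^ 3 + lam) f
  integrable : Integrable fun s : ℝ => ‖f (Complex.I * s)‖ ^ 2
  ne_zero : f ≠ 0

theorem IsEigenvalueICO.exists_isEntireEigenfunction {lam : ℂ} (h : IsEigenvalueICO lam) :
    ∃ f, IsEntireEigenfunction lam f := by
  obtain ⟨ψ, hne, hψ, hi, heq⟩ := h
  have hψ' : Differentiable ℝ (deriv ψ) :=
    (contDiff_succ_iff_deriv (n := 1).1 hψ).2.2.differentiable one_ne_zero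
  have hψ_solves : SolvesSchrodinger (fun x : ℝ => Complex.I * x ^ 3 - lam) ψ :=
    ⟨fun x => (hψ.differentiable two_ne_zero x).hasDerivAt,
      fun x => (hψ' x).hasDerivAt.congr_deriv (by linear_combination -heq x)⟩
  obtain ⟨f, hf, hf₀, hf₁⟩ := exists_entire_solvesSchrodinger
    (V := fun z => z ^ 3 + lam) (by fun_prop) (ψ 0) (-Complex.I * deriv ψ 0)
  have hline : SolvesSchrodinger (fun x : ℝ => Complex.I * x ^ 3 - lam)
      (fun s : ℝ => f (Complex.I * s)) := by
    convert! hf.comp_line 0 Complex.I using 2 with s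
    · linear_combination
        (Complex.I * s ^ 3 - Complex.I ^ 3 * s ^ 3 - lam) * Complex.I_sq
    · rw [zero_add]
  have hfψ : (fun s : ℝ => f (Complex.I * s)) = ψ := by
    refine hline.eq_of_initial_eq hψ_solves (by fun_prop) (a := 0) (by simpa using hf₀) ?_
    have := congrFun (hf.deriv_comp_line 0 Complex.I) 0
    simp only [zero_add, Complex.ofReal_zero, mul_zero, hf₁] at this
    rw [this]
    linear_combination (-deriv ψ 0) * Complex.I_sq
  refine ⟨f, hf, by simpa only [← hfψ] using hi, ?_⟩
  rintro rfl
  exact hne (hfψ ▸ rfl)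

namespace IsEntireEigenfunction

variable {lam : ℂ} {f : ℂ → ℂ}

theorem conj_conj (hf : IsEntireEigenfunction lam f) :
    IsEntireEigenfunction (conj lam) fun z => conj (f (conj z)) where
  solves := by simpa using hf.solves.conj_conj
  integrable := by simpa using hf.integrable.comp_neg
  ne_zero hzero := hf.ne_zero (funext fun z => by simpa using congrFun hzero (starRingEnd ℂ z))

theorem re_pos (hf : IsEntireEigenfunction lam f) : 0 < lam.re := by
  by_contra! hre
  have hline := hf.solves.comp_line 0 Complex.I
  simp only [zero_add] at hline
  refine hf.solves.comp_mul_ofReal_ne_zero (by fun_prop) hf.ne_zero Complex.I_ne_zero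
    (hline.eq_zero_of_re_nonneg (fun t => ?_) hf.integrable)
  have hpotential : Complex.I ^ 2 * ((Complex.I * t) ^ 3 + lam) =
      Complex.I * (t ^ 3 : ℝ) - lam := by
    push_cast
    linear_combination (lam + Complex.I * t ^ 3 * (Complex.I ^ 2 - 1)) * Complex.I_sq
  rw [hpotential, Complex.sub_re, Complex.I_mul_re, Complex.ofReal_im]
  linarith

theorem im_nonpos (hf : IsEntireEigenfunction lam f) : lam.im ≤ 0 := by
  by_contra! him
  have hω := descentDirection_sq_im_pos
  have hg := hf.conj_conj
  have hne : descentDirection ≠ 0 := Complex.exp_ne_zero _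
  have hlt := hf.solves.comp_descentDirection.norm_lt_of_eventually_norm_le
    (continuous_pow 3) (fun t ht => pow_nonneg ht 3) hg.solves.comp_descentDirection
    (.comp_descentDirection hf.solves hf.integrable.integrableOn)
    (.comp_descentDirection hg.solves hg.integrable.integrableOn)
    (hf.solves.comp_mul_ofReal_ne_zero (by fun_prop) hf.ne_zero hne)
    (hg.solves.comp_mul_ofReal_ne_zero (by fun_prop) hg.ne_zero hne)
    (by rw [norm_mul, norm_mul, RCLike.norm_conj])
    (by
      simp only [Complex.mul_re, Complex.conj_re, Complex.conj_im]
      nlinarith [mul_pos hω him])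
    (by
      simp only [Complex.mul_im, Complex.conj_re, Complex.conj_im]
      nlinarith [mul_pos hω hf.re_pos, mul_pos (neg_pos.2 descentDirection_sq_re_neg) him])
    fun δ hδ => eventually_norm_descentDirection_le hf.solves hf.integrable.integrableOn hg.solves
      hg.integrable.integrableOn (fun x => by simp) hδ
  simp at hlt

end IsEntireEigenfunction

end Eigenvalues

theorem eigenvalues_real_positive (lam : ℂ) (h : IsEigenvalueICO lam) :
    lam.im = 0 ∧ 0 < lam.re := by
  obtain ⟨f, hf⟩ := h.exists_isEntireEigenfunction
  have him : 0 ≤ lam.im := by simpa using hf.conj_conj.im_nonpos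
  exact ⟨le_antisymm hf.im_nonpos him, hf.re_pos⟩
end

section
/- Let λ ∈ ℂ and let ψ₁, ψ₂ : ℝ → ℂ both be twice continuously differentiable, square-integrable on ℝ, and satisfy −ψ''(x) + i·x³·ψ(x) = λ·ψ(x) for all x ∈ ℝ. Then ψ₁ and ψ₂ are linearly dependent: there exist (a,b) ∈ ℂ × ℂ with (a,b) ≠ (0,0) and a·ψ₁(x) + b·ψ₂(x) = 0 for all x ∈ ℝ. -/
open MeasureTheory

/-!
The Wronskian of two solutions of `u'' = q u` is constant. If `re q ≥ m` on a half-line, then a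
solution which is square-integrable there has a square-integrable derivative: since
`(re ⟪u, u'⟫)' ≥ ‖u'‖² + m ‖u‖²`, otherwise `(‖u‖²)' = 2 re ⟪u, u'⟫` would tend to infinity, and
`‖u‖²` could not be integrable. Hence the Wronskian of two square-integrable solutions is an
integrable constant on a half-line, that is zero, and uniqueness for the initial value problem makes
the solutions linearly dependent. For the cubic oscillator, `q x = I * x ^ 3 - lam` has constant
real part.
-/

open Set Filter Asymptotics
open scoped RealInnerProductSpace

theorem not_integrableOn_Ioi_of_tendsto_atTop {f : ℝ → ℝ} {a : ℝ} (hf : Tendsto f atTop atTop) :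
    ¬ IntegrableOn f (Ioi a) := by
  -- The identity function tends to infinity, and its derivative `1` is `O(f)`.
  refine not_integrableOn_of_tendsto_norm_atTop_of_deriv_isBigO_filter (f := fun x : ℝ => x) atTop
    (Ioi_mem_atTop a) (.of_forall fun x => differentiableAt_fun_id) tendsto_norm_atTop_atTop ?_
  refine IsBigO.of_bound 1 ?_
  filter_upwards [hf.eventually_ge_atTop 1] with x hx
  simpa only [deriv_id'', norm_one, one_mul, Real.norm_eq_abs] using hx.trans (le_abs_self (f x))

theorem tendsto_atTop_of_eventually_le_deriv {f f' : ℝ → ℝ} {c : ℝ} (hc : 0 < c)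
    (hf : ∀ᶠ x in atTop, HasDerivAt f (f' x) x) (hf' : ∀ᶠ x in atTop, c ≤ f' x) :
    Tendsto f atTop atTop := by
  obtain ⟨X, hX⟩ := eventually_atTop.1 (hf.and hf')
  have hderiv (x : ℝ) (hx : x ∈ Ici X) : HasDerivAt f (f' x) x := (hX x hx).1
  have hline (x : ℝ) (hx : X ≤ x) : f X + c * (x - X) ≤ f x := by
    refine add_le_of_le_sub_left <| (convex_Ici X).mul_sub_le_image_sub_of_le_deriv
      (fun y hy => (hderiv y hy).continuousAt.continuousWithinAt)
      (fun y hy => (hderiv y (interior_subset hy)).differentiableAt.differentiableWithinAt)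
      (fun y hy => ?_) X self_mem_Ici x hx hx
    rw [(hderiv y (interior_subset hy)).deriv]
    exact (hX y (interior_subset hy)).2
  refine tendsto_atTop_mono' atTop ((eventually_ge_atTop X).mono hline) ?_
  exact tendsto_atTop_add_const_left _ _
    ((tendsto_atTop_add_const_right atTop (-X) tendsto_id).const_mul_atTop hc)

theorem frequently_deriv_lt_of_integrableOn_Ioi {f f' : ℝ → ℝ} {a c : ℝ} (hc : 0 < c)
    (hf : ∀ᶠ x in atTop, HasDerivAt f (f' x) x) (hint : IntegrableOn f (Ioi a)) :
    ∃ᶠ x in atTop, f' x < c := by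
  intro hge
  simp only [not_lt] at hge
  exact not_integrableOn_Ioi_of_tendsto_atTop (tendsto_atTop_of_eventually_le_deriv hc hf hge) hint

theorem integrableOn_Ioi_of_frequently_integral_norm_le {E : Type*} [NormedAddCommGroup E]
    {f : ℝ → E} {a I : ℝ} (hf : ∀ x, IntegrableOn f (Ioc a x))
    (hI : ∃ᶠ x in atTop, ∫ t in a..x, ‖f t‖ ≤ I) : IntegrableOn f (Ioi a) := by
  let s : Set ℝ := {x | ∫ t in a..x, ‖f t‖ ≤ I}
  have : (atTop ⊓ 𝓟 s).NeBot := frequently_mem_iff_neBot.1 hI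
  exact integrableOn_Ioi_of_intervalIntegral_norm_bounded (l := atTop ⊓ 𝓟 s) (b := fun x => x)
    I a hf (tendsto_id.mono_left inf_le_left) (eventually_inf_principal.2 (.of_forall fun _ => id))

section Energy

variable {E : Type*} [NormedAddCommGroup E] [InnerProductSpace ℝ E] {u u' u'' : ℝ → E} {a m : ℝ}

theorem integral_norm_sq_deriv_add_le {b : ℝ} (hab : a ≤ b)
    (hu : ∀ x ∈ Icc a b, HasDerivAt u (u' x) x) (hu' : ∀ x ∈ Icc a b, HasDerivAt u' (u'' x) x)
    (hle : ∀ x ∈ Ioo a b, m * ‖u x‖ ^ 2 ≤ ⟪u x, u'' x⟫) :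
    (∫ x in a..b, ‖u' x‖ ^ 2) + m * ∫ x in a..b, ‖u x‖ ^ 2 ≤ ⟪u b, u' b⟫ - ⟪u a, u' a⟫ := by
  have hcont : ContinuousOn u (Icc a b) := fun x hx => (hu x hx).continuousAt.continuousWithinAt
  have hcont' : ContinuousOn u' (Icc a b) := fun x hx => (hu' x hx).continuousAt.continuousWithinAt
  have hsq : ContinuousOn (fun x => m * ‖u x‖ ^ 2) (Icc a b) := by fun_prop
  have hsq' : ContinuousOn (fun x => ‖u' x‖ ^ 2) (Icc a b) := by fun_prop
  have hderiv (x : ℝ) (hx : x ∈ Ioo a b) :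
      HasDerivAt (fun y => ⟪u y, u' y⟫) (⟪u x, u'' x⟫ + ⟪u' x, u' x⟫) x :=
    (hu x (Ioo_subset_Icc_self hx)).inner ℝ (hu' x (Ioo_subset_Icc_self hx))
  rw [← intervalIntegral.integral_const_mul,
    ← intervalIntegral.integral_add (hsq'.intervalIntegrable_of_Icc hab)
      (hsq.intervalIntegrable_of_Icc hab)]
  refine intervalIntegral.integral_le_sub_of_hasDeriv_right_of_le hab (hcont.inner hcont')
    (fun x hx => (hderiv x hx).hasDerivWithinAt) (hsq'.add hsq).integrableOn_Icc fun x hx => ?_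
  rw [real_inner_self_eq_norm_sq, add_comm]
  exact add_le_add_left (hle x hx) _

theorem memLp_two_deriv_of_le_inner (hu : ∀ x ∈ Ici a, HasDerivAt u (u' x) x)
    (hu' : ∀ x ∈ Ici a, HasDerivAt u' (u'' x) x)
    (hle : ∀ x ∈ Ioi a, m * ‖u x‖ ^ 2 ≤ ⟪u x, u'' x⟫)
    (hint : MemLp u 2 (volume.restrict (Ioi a))) : MemLp u' 2 (volume.restrict (Ioi a)) := by
  have hcont' : ContinuousOn u' (Ici a) := fun x hx => (hu' x hx).continuousAt.continuousWithinAt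
  have hsq : IntegrableOn (fun x => ‖u x‖ ^ 2) (Ioi a) := hint.integrable_norm_pow two_ne_zero
  have hfreq : ∃ᶠ x in atTop, 2 * ⟪u x, u' x⟫ < 2 :=
    frequently_deriv_lt_of_integrableOn_Ioi two_pos
      ((eventually_ge_atTop a).mono fun x hx => (hu x hx).norm_sq) hsq
  have hmass (x : ℝ) (hx : a ≤ x) :
      -(|m| * ∫ t in Ioi a, ‖u t‖ ^ 2) ≤ m * ∫ t in a..x, ‖u t‖ ^ 2 := by
    have hnonneg : 0 ≤ ∫ t in a..x, ‖u t‖ ^ 2 :=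
      intervalIntegral.integral_nonneg hx fun t _ => sq_nonneg _
    have hmono : ∫ t in a..x, ‖u t‖ ^ 2 ≤ ∫ t in Ioi a, ‖u t‖ ^ 2 := by
      rw [intervalIntegral.integral_of_le hx]
      exact setIntegral_mono_set hsq (.of_forall fun t => sq_nonneg _)
        Ioc_subset_Ioi_self.eventuallyLE
    calc -(|m| * ∫ t in Ioi a, ‖u t‖ ^ 2) ≤ -(|m| * ∫ t in a..x, ‖u t‖ ^ 2) := by gcongr
      _ ≤ m * ∫ t in a..x, ‖u t‖ ^ 2 := by
        rw [← neg_mul]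
        exact mul_le_mul_of_nonneg_right (neg_abs_le m) hnonneg
  have hbound : ∃ᶠ x in atTop,
      ∫ t in a..x, ‖u' t‖ ^ 2 ≤ 1 - ⟪u a, u' a⟫ + |m| * ∫ t in Ioi a, ‖u t‖ ^ 2 := by
    refine (hfreq.and_eventually (eventually_ge_atTop a)).mono fun x ⟨hlt, hx⟩ => ?_
    linarith [hlt, hmass x hx, integral_norm_sq_deriv_add_le hx (fun t ht => hu t ht.1)
      (fun t ht => hu' t ht.1) fun t ht => hle t ht.1]
  rw [memLp_two_iff_integrable_sq_norm
    ((hcont'.mono Ioi_subset_Ici_self).aestronglyMeasurable measurableSet_Ioi)]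
  refine integrableOn_Ioi_of_frequently_integral_norm_le (fun x => ?_)
    (by simpa only [norm_pow, norm_norm] using hbound)
  exact ((hcont'.mono Icc_subset_Ici_self).norm.pow 2).integrableOn_Icc.mono_set
    Ioc_subset_Icc_self

end Energy

theorem eq_zero_of_hasDerivAt_clm_apply {E : Type*} [NormedAddCommGroup E] [NormedSpace ℝ E]
    {A : ℝ → E →L[ℝ] E} (hA : Continuous A) {f : ℝ → E}
    (hf : ∀ t, HasDerivAt f (A t (f t)) t) {t₀ : ℝ} (h₀ : f t₀ = 0) : f = 0 := by
  ext t
  obtain ⟨l, hl⟩ := exists_lt (min t t₀)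
  obtain ⟨r, hr⟩ := exists_gt (max t t₀)
  obtain ⟨hlt, hlt₀⟩ := lt_min_iff.1 hl
  obtain ⟨htr, ht₀r⟩ := max_lt_iff.1 hr
  obtain ⟨K, hK⟩ := isCompact_Icc (a := l) (b := r) |>.bddAbove_image hA.nnnorm.continuousOn
  have hlip (s : ℝ) (hs : s ∈ Ioo l r) : LipschitzOnWith K (A s) univ :=
    ((A s).lipschitz.weaken (hK (mem_image_of_mem _ (Ioo_subset_Icc_self hs)))).lipschitzOnWith
  have hzero (s : ℝ) : HasDerivAt (fun _ : ℝ => (0 : E)) (A s 0) s := by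
    simpa only [map_zero] using hasDerivAt_const s (0 : E)
  exact ODE_solution_unique_of_mem_Ioo hlip ⟨hlt₀, ht₀r⟩ (fun s _ => ⟨hf s, mem_univ _⟩)
    (fun s _ => ⟨hzero s, mem_univ _⟩) h₀ ⟨hlt, htr⟩

/-- `u` is a classical solution on `ℝ` of the one-dimensional Schrödinger equation `u'' = q u` with
complex potential `q`; the spectral parameter is absorbed into `q`. -/
structure IsSchrodingerSolution (q u : ℝ → ℂ) : Prop where
  hasDerivAt (x : ℝ) : HasDerivAt u (deriv u x) x
  hasDerivAt_deriv (x : ℝ) : HasDerivAt (deriv u) (q x * u x) x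

/-- The Wronskian of two functions of a real variable. -/
noncomputable def wronskian (u v : ℝ → ℂ) (x : ℝ) : ℂ :=
  u x * deriv v x - v x * deriv u x

namespace IsSchrodingerSolution

variable {q u v : ℝ → ℂ}

theorem of_contDiff (hu : ContDiff ℝ 2 u) (heq : ∀ x, deriv (deriv u) x = q x * u x) :
    IsSchrodingerSolution q u where
  hasDerivAt x := (hu.differentiable two_ne_zero x).hasDerivAt
  hasDerivAt_deriv x := heq x ▸ (hu.differentiable_deriv_two x).hasDerivAt

theorem deriv_linearCombination (hu : IsSchrodingerSolution q u) (hv : IsSchrodingerSolution q v)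
    (c d : ℂ) : deriv (fun x => c * u x + d * v x) = fun x => c * deriv u x + d * deriv v x :=
  funext fun x => (((hu.hasDerivAt x).const_mul c).add ((hv.hasDerivAt x).const_mul d)).deriv

theorem linearCombination (hu : IsSchrodingerSolution q u) (hv : IsSchrodingerSolution q v)
    (c d : ℂ) : IsSchrodingerSolution q fun x => c * u x + d * v x where
  hasDerivAt x := by
    rw [hu.deriv_linearCombination hv]
    exact ((hu.hasDerivAt x).const_mul c).add ((hv.hasDerivAt x).const_mul d)
  hasDerivAt_deriv x := by
    rw [hu.deriv_linearCombination hv]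
    refine (((hu.hasDerivAt_deriv x).const_mul c).add
      ((hv.hasDerivAt_deriv x).const_mul d)).congr_deriv ?_
    ring

theorem eq_zero_of_eq_zero_of_deriv_eq_zero (hq : Continuous q) (hu : IsSchrodingerSolution q u)
    {x₀ : ℝ} (h₀ : u x₀ = 0) (h₀' : deriv u x₀ = 0) : u = 0 := by
  let A (x : ℝ) : ℂ × ℂ →L[ℝ] ℂ × ℂ :=
    (ContinuousLinearMap.snd ℝ ℂ ℂ).prod (q x • ContinuousLinearMap.fst ℝ ℂ ℂ)
  have hA : Continuous A :=
    (ContinuousLinearMap.prodL (S := ℝ)).continuous.comp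
      (continuous_const.prodMk (hq.smul continuous_const))
  have hpair : (fun x => (u x, deriv u x)) = 0 :=
    eq_zero_of_hasDerivAt_clm_apply hA
      (fun x => (hu.hasDerivAt x).prodMk (hu.hasDerivAt_deriv x)) (Prod.ext h₀ h₀')
  exact funext fun x => congrArg Prod.fst (congrFun hpair x)

theorem hasDerivAt_wronskian (hu : IsSchrodingerSolution q u) (hv : IsSchrodingerSolution q v)
    (x : ℝ) : HasDerivAt (wronskian u v) 0 x := by
  refine (((hu.hasDerivAt x).mul (hv.hasDerivAt_deriv x)).sub
    ((hv.hasDerivAt x).mul (hu.hasDerivAt_deriv x))).congr_deriv ?_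
  ring

theorem wronskian_eq (hu : IsSchrodingerSolution q u) (hv : IsSchrodingerSolution q v) (x y : ℝ) :
    wronskian u v x = wronskian u v y :=
  is_const_of_deriv_eq_zero (fun z => (hu.hasDerivAt_wronskian hv z).differentiableAt)
    (fun z => (hu.hasDerivAt_wronskian hv z).deriv) x y

theorem exists_linearCombination_eq_zero_of_wronskian_eq_zero (hq : Continuous q)
    (hu : IsSchrodingerSolution q u) (hv : IsSchrodingerSolution q v) {x₀ : ℝ}
    (hW : wronskian u v x₀ = 0) :
    ∃ c d : ℂ, (c, d) ≠ (0, 0) ∧ ∀ x, c * u x + d * v x = 0 := by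
  have hdet : !![u x₀, v x₀; deriv u x₀, deriv v x₀].det = 0 := by
    rw [Matrix.det_fin_two_of]
    exact hW
  obtain ⟨w, hw, hker⟩ := Matrix.exists_mulVec_eq_zero_iff.2 hdet
  have hval : w 0 * u x₀ + w 1 * v x₀ = 0 := by
    simpa [Matrix.mulVec, dotProduct, mul_comm] using congrFun hker 0
  have hderiv : w 0 * deriv u x₀ + w 1 * deriv v x₀ = 0 := by
    simpa [Matrix.mulVec, dotProduct, mul_comm] using congrFun hker 1
  have hzero := (hu.linearCombination hv (w 0) (w 1)).eq_zero_of_eq_zero_of_deriv_eq_zero hq hval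
    (by rwa [hu.deriv_linearCombination hv])
  refine ⟨w 0, w 1, fun h => hw ?_, congrFun hzero⟩
  obtain ⟨h0, h1⟩ := Prod.mk.inj h
  exact funext <| Fin.forall_fin_two.2 ⟨h0, h1⟩

theorem memLp_two_deriv {a m : ℝ} (hu : IsSchrodingerSolution q u)
    (hre : ∀ x ∈ Ioi a, m ≤ (q x).re) (hint : MemLp u 2 (volume.restrict (Ioi a))) :
    MemLp (deriv u) 2 (volume.restrict (Ioi a)) := by
  refine memLp_two_deriv_of_le_inner (m := m) (fun x _ => hu.hasDerivAt x)
    (fun x _ => hu.hasDerivAt_deriv x) (fun x hx => ?_) hint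
  have hinner : ⟪u x, q x * u x⟫ = (q x).re * ‖u x‖ ^ 2 := by
    rw [Complex.inner, mul_assoc, Complex.mul_conj', ← Complex.ofReal_pow, Complex.re_mul_ofReal]
  rw [hinner]
  exact mul_le_mul_of_nonneg_right (hre x hx) (sq_nonneg _)

theorem wronskian_eq_zero_of_memLp_two {a m : ℝ} (hu : IsSchrodingerSolution q u)
    (hv : IsSchrodingerSolution q v) (hre : ∀ x ∈ Ioi a, m ≤ (q x).re)
    (huint : MemLp u 2 (volume.restrict (Ioi a))) (hvint : MemLp v 2 (volume.restrict (Ioi a)))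
    (x : ℝ) : wronskian u v x = 0 := by
  have hint : IntegrableOn (wronskian u v) (Ioi a) :=
    (huint.integrable_mul (hv.memLp_two_deriv hre hvint)).sub
      (hvint.integrable_mul (hu.memLp_two_deriv hre huint))
  rw [funext fun y => hu.wronskian_eq hv y x, integrableOn_const_iff] at hint
  simpa using hint

end IsSchrodingerSolution

theorem geometric_simplicity_general {q ψ₁ ψ₂ : ℝ → ℂ} {a m : ℝ} (hq : Continuous q)
    (hre : ∀ x ∈ Ioi a, m ≤ (q x).re)
    (h₁ : IsSchrodingerSolution q ψ₁) (h₂ : IsSchrodingerSolution q ψ₂)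
    (h₁int : MemLp ψ₁ 2 (volume.restrict (Ioi a)))
    (h₂int : MemLp ψ₂ 2 (volume.restrict (Ioi a))) :
    ∃ c d : ℂ, (c, d) ≠ (0, 0) ∧ ∀ x : ℝ, c * ψ₁ x + d * ψ₂ x = 0 :=
  h₁.exists_linearCombination_eq_zero_of_wronskian_eq_zero hq h₂
    (h₁.wronskian_eq_zero_of_memLp_two h₂ hre h₁int h₂int a)

/-- Geometric simplicity: any two square-integrable classical solutions of
`-ψ'' + i x³ ψ = lam ψ` are linearly dependent. -/
theorem geometric_simplicity (lam : ℂ) (ψ₁ ψ₂ : ℝ → ℂ)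
    (h₁smooth : ContDiff ℝ 2 ψ₁) (h₂smooth : ContDiff ℝ 2 ψ₂)
    (h₁int : Integrable (fun x : ℝ => ‖ψ₁ x‖ ^ 2))
    (h₂int : Integrable (fun x : ℝ => ‖ψ₂ x‖ ^ 2))
    (h₁eq : ∀ x : ℝ, -(deriv (deriv ψ₁) x) + Complex.I * (x : ℂ) ^ 3 * ψ₁ x = lam * ψ₁ x)
    (h₂eq : ∀ x : ℝ, -(deriv (deriv ψ₂) x) + Complex.I * (x : ℂ) ^ 3 * ψ₂ x = lam * ψ₂ x) :
    ∃ a b : ℂ, (a, b) ≠ (0, 0) ∧ ∀ x : ℝ, a * ψ₁ x + b * ψ₂ x = 0 := by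
  have hre (x : ℝ) : -lam.re ≤ (Complex.I * (x : ℂ) ^ 3 - lam).re := by
    simp [← Complex.ofReal_pow]
  have hL2 {ψ : ℝ → ℂ} (hψ : Continuous ψ) (hint : Integrable fun x => ‖ψ x‖ ^ 2) : MemLp ψ 2 :=
    (memLp_two_iff_integrable_sq_norm hψ.aestronglyMeasurable).2 hint
  exact geometric_simplicity_general (a := 0) (by fun_prop) (fun x _ => hre x)
    (.of_contDiff h₁smooth fun x => by linear_combination -h₁eq x)
    (.of_contDiff h₂smooth fun x => by linear_combination -h₂eq x)
    ((hL2 h₁smooth.continuous h₁int).restrict _) ((hL2 h₂smooth.continuous h₂int).restrict _)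
end
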